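/- arXiv:1710.03635 — 2 statements merged into one kernel-verified Lean document; each statement's English description precedes it below -/
import Mathlib

section
/- Let T be a complete discrete valuation ring whose residue field has characteristic p > 0, and let K be its fraction field. Let E_P be a finite Galois field extension of Frac(T⟦x⟧) whose degree is not divisible by p. Then there exists a finite separable field extension E of the rational function field K(x) such that E ⊗_{K(x)} Frac(T⟦x⟧) is isomorphic to E_P as a Frac(T⟦x⟧)-algebra. -/
section auxiliary
open Polynomial TensorProduct
section

theorem aux_complete {R S : Type} [CommRing R] [IsNoetherianRing R] (I : Ideal R)
    [IsAdicComplete I R] [CommRing S] [Algebra R S] [Module.Finite R S] :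
    IsAdicComplete (I.map (algebraMap R S)) S := by
  have h1 : IsAdicComplete I S := by
    rw [← AdicCompletion.of_bijective_iff]
    have hb := AdicCompletion.ofTensorProduct_bijective_of_finite_of_isNoetherian I S
    have hR : Function.Bijective (AdicCompletion.of I R) := AdicCompletion.of_bijective I R
    let eR := LinearEquiv.ofBijective _ hR
    let E : S ≃ₗ[R] (AdicCompletion I R ⊗[R] S) :=
      (TensorProduct.lid R S).symm ≪≫ₗ TensorProduct.congr eR (LinearEquiv.refl R S)
    have : (AdicCompletion.of I S : S → _) =
        (AdicCompletion.ofTensorProduct I S) ∘ E := by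
      ext1 s
      have h2 : E s = (1 : AdicCompletion I R) ⊗ₜ[R] s := by
        simp only [E, LinearEquiv.trans_apply, TensorProduct.lid_symm_apply,
          TensorProduct.congr_tmul, LinearEquiv.refl_apply]
        rfl
      simp [h2, AdicCompletion.ofTensorProduct_tmul]
    rw [this]
    exact hb.comp E.bijective
  have h2 := (IsPrecomplete.map_algebraMap_iff (I := I) (S := S) (M := S)).2 inferInstance
  have h3 := (IsHausdorff.map_algebraMap_iff (I := I) (S := S) (M := S)).2 inferInstance
  exact { toIsHausdorff := h3, toIsPrecomplete := h2 }

theorem aux_fix {S : Type} [CommRing S] (J : Ideal S) [IsAdicComplete J S] (c : S) (hc : c ∈ J)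
    (q : S[X]) : ∃ z ∈ J, c + z + q.eval z * z ^ 2 = 0 := by
  let F : S → S := fun z => -(c + q.eval z * z ^ 2)
  have hFJ : ∀ z ∈ J, F z ∈ J := fun z hz => J.neg_mem (J.add_mem hc
    (J.mul_mem_left _ (by rw [pow_two]; exact J.mul_mem_left _ hz)))
  have hF : ∀ z ∈ J, ∀ w ∈ J, ∀ n, z - w ∈ J ^ n → F z - F w ∈ J ^ (n + 1) := by
    intro z hz w hw n h
    obtain ⟨k, hk⟩ := Polynomial.sub_dvd_eval_sub z w q
    have : F z - F w = (z - w) * (-((z + w) * q.eval z + w * (w * k))) := by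
      have hk' : q.eval z = q.eval w + (z - w) * k := by rw [← hk]; ring
      simp only [F]; rw [hk']; ring
    rw [this, pow_succ]
    exact Ideal.mul_mem_mul h (J.neg_mem (J.add_mem (J.mul_mem_right _ (J.add_mem hz hw))
      (J.mul_mem_right _ hw)))
  let s : ℕ → S := fun n => F^[n] 0
  have hs : ∀ n, s (n + 1) = F (s n) := fun n => Function.iterate_succ_apply' F n 0
  have hsJ : ∀ n, s n ∈ J := by
    intro n
    induction n with
    | zero => exact J.zero_mem
    | succ n ih => rw [hs]; exact hFJ _ ih
  have hd : ∀ n, s (n + 1) - s n ∈ J ^ n := by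
    intro n
    induction n with
    | zero => simp
    | succ n ih => rw [hs (n + 1), hs n, ← hs n]; rw [hs n] at ih ⊢; exact hF _ (hFJ _ (hsJ n)) _ (hsJ n) n ih
  have hmn : ∀ m n, m ≤ n → s n - s m ∈ J ^ m := by
    intro m n h
    induction n, h using Nat.le_induction with
    | base => simp
    | succ n h ih =>
      have := (J ^ m).add_mem (Ideal.pow_le_pow_right h (hd n)) ih
      simpa using this
  obtain ⟨L, hL⟩ := IsPrecomplete.prec (inferInstance : IsPrecomplete J S) (f := s) (by
    intro m n h
    rw [SModEq.sub_mem]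
    simpa using (J ^ m).neg_mem (hmn m n h))
  have hL' : ∀ n, s n - L ∈ J ^ n := fun n => by
    have := hL n
    rw [SModEq.sub_mem] at this
    simpa using this
  have hLJ : L ∈ J := by
    have := J.sub_mem (hsJ 1) (by simpa using hL' 1)
    simpa using this
  have hFL : F L - L = 0 := by
    apply IsHausdorff.haus (inferInstance : IsHausdorff J S)
    intro n
    rw [SModEq.zero]
    have h1 := Ideal.pow_le_pow_right (Nat.le_succ n) (hF _ (hsJ n) _ hLJ n (hL' n))
    have h2 := Ideal.pow_le_pow_right (Nat.le_succ n) (hL' (n + 1))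
    rw [hs] at h2
    have := (J ^ n).sub_mem h2 h1
    simpa using this
  refine ⟨L, hLJ, ?_⟩
  simp only [F] at hFL
  linear_combination -hFL

theorem aux_tougeron {R : Type} [CommRing R] [Nontrivial R] [IsNoetherianRing R] (x : R)
    [IsAdicComplete (Ideal.span {x}) R] (f g a b r : R[X]) (δ : R) (hf : f.Monic) (hg : g.Monic)
    (hd : g.natDegree = f.natDegree) (hab : a * f + b * derivative f = C δ)
    (hr : g = f + C (δ ^ 2 * x) * r) : Nonempty (AdjoinRoot g ≃ₐ[R] AdjoinRoot f) := by
  let S := AdjoinRoot f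
  have : Module.Finite R S := hf.finite_adjoinRoot
  have : Module.Free R S := hf.free_adjoinRoot
  have : Module.Finite R (AdjoinRoot g) := hg.finite_adjoinRoot
  have : Module.Free R (AdjoinRoot g) := hg.free_adjoinRoot
  let J : Ideal S := (Ideal.span {x}).map (algebraMap R S)
  have hJ : J = Ideal.span {algebraMap R S x} := by simp [J, Ideal.map_span]
  have hc : IsAdicComplete J S := aux_complete _
  have hjac : J ≤ Ideal.jacobson ⊥ := IsAdicComplete.le_jacobson_bot J
  have hu : ∀ s : S, IsUnit (1 + algebraMap R S x * s) := by
    intro s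
    have hx : algebraMap R S x ∈ Ideal.jacobson (⊥ : Ideal S) :=
      hjac (hJ ▸ Ideal.mem_span_singleton_self _)
    have := Ideal.mem_jacobson_bot.1 hx s
    rwa [add_comm] at this
  let α : S := AdjoinRoot.root f
  have hfα : aeval α f = 0 := AdjoinRoot.aeval_eq f ▸ AdjoinRoot.mk_self
  have hδ : algebraMap R S δ = aeval α b * aeval α (derivative f) := by
    have := congrArg (aeval α) hab
    simpa [hfα] using this.symm
  set X' := algebraMap R S x
  set d := aeval α (derivative f)
  set β := aeval α b
  have hg1 : aeval α g = (β * d) ^ 2 * X' * aeval α r := by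
    rw [hr]; simp [hfα, hδ, X']
  obtain ⟨u, hu1⟩ := hu (β * (β * d) * aeval α (derivative r))
  have hg2 : aeval α (derivative g) = d * u := by
    rw [hu1, hr, derivative_add, derivative_C_mul]
    simp only [map_add, map_mul, aeval_C, map_pow, hδ]
    change d + _ = _
    ring
  obtain ⟨c, hc1⟩ : ∃ c, aeval α g = (aeval α (derivative g)) ^ 2 * (X' * c) := by
    refine ⟨β ^ 2 * aeval α r * (↑u⁻¹ : S) ^ 2, ?_⟩
    rw [hg1, hg2]
    have : (u : S) * (↑u⁻¹ : S) = 1 := u.mul_inv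
    linear_combination (- d ^ 2 * X' * β ^ 2 * aeval α r * (1 + u * (↑u⁻¹ : S))) * this
  set γ := aeval α (derivative g)
  -- expansion
  obtain ⟨q, hq⟩ := Polynomial.binomExpansion ((g.map (algebraMap R S)).map (C : S →+* S[X])) (C α) (C γ * X)
  have hq' : (g.map (algebraMap R S)).comp (C α + C γ * X) =
      C (γ ^ 2) * (C (X' * c) + X + q * X ^ 2) := by
    have e1 : ((g.map (algebraMap R S)).map (C : S →+* S[X])).eval (C α + C γ * X) =
      (g.map (algebraMap R S)).comp (C α + C γ * X) := by
      rw [Polynomial.comp, Polynomial.eval_map]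
    have e2 : ∀ Q : S[X], (Q.map (C : S →+* S[X])).eval (C α) = C (Q.eval α) := fun Q => by
      rw [eval_map, eval₂_at_apply]
    rw [← e1, hq, derivative_map, e2, e2, derivative_map,
      eval_map_algebraMap, eval_map_algebraMap, hc1]
    simp only [C_mul, C_pow]
    change _ + C γ * _ + _ = _
    ring
  let P : S[X] := C (X' * c) + X + q * X ^ 2
  have hJmem : X' * c ∈ J := by
    rw [hJ]; exact Ideal.mul_mem_right _ _ (Ideal.mem_span_singleton_self _)
  obtain ⟨z, hz1, hz2⟩ := aux_fix J (X' * c) hJmem q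
  set α' := α + γ * z
  have hroot : aeval α' g = 0 := by
    have := congrArg (Polynomial.eval z) hq'
    rw [eval_comp] at this
    simp only [eval_add, eval_C, eval_mul, eval_X, eval_pow, hz2, mul_zero, eval_map_algebraMap] at this
    exact this
  let φ : AdjoinRoot g →ₐ[R] S := AdjoinRoot.liftAlgHom g (Algebra.ofId R S) α' (by
    rw [← hroot]; rfl)
  have hφ : φ (AdjoinRoot.root g) = α' := AdjoinRoot.liftAlgHom_root _ _ _ _
  have hsurj : Function.Surjective φ := by
    rw [← AlgHom.coe_toLinearMap, ← LinearMap.range_eq_top, eq_top_iff]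
    apply Submodule.le_of_le_smul_of_le_jacobson_bot (I := Ideal.span {x}) Module.Finite.fg_top
      (IsAdicComplete.le_jacobson_bot _)
    intro s _
    obtain ⟨Q, rfl⟩ := AdjoinRoot.mk_surjective s
    rw [← AdjoinRoot.aeval_eq]
    change aeval α Q ∈ _
    have : aeval α Q = aeval α' Q + (aeval α Q - aeval α' Q) := by ring
    rw [this]
    apply Submodule.add_mem_sup
    · refine ⟨AdjoinRoot.mk g Q, ?_⟩
      rw [← AdjoinRoot.aeval_eq, AlgHom.coe_toLinearMap, ← Polynomial.aeval_algHom_apply, hφ]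
    · obtain ⟨k, hk⟩ := Polynomial.sub_dvd_eval_sub α α' (Q.map (algebraMap R S))
      rw [eval_map_algebraMap, eval_map_algebraMap] at hk
      rw [hk]
      have : (α - α') * k ∈ J := by
        apply J.mul_mem_right
        simp only [α', sub_add_cancel_left]
        exact J.neg_mem (J.mul_mem_left _ hz1)
      rw [hJ, Ideal.mem_span_singleton] at this
      obtain ⟨w, hw⟩ := this
      rw [hw, ← Algebra.smul_def]
      exact Submodule.smul_mem_smul (Ideal.mem_span_singleton_self x) trivial
  have hfr : Module.finrank R (AdjoinRoot g) = Module.finrank R S := by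
    rw [(AdjoinRoot.powerBasis' hf).finrank, (AdjoinRoot.powerBasis' hg).finrank]
    simpa using hd
  have hinj : Function.Injective φ := by
    let e := LinearEquiv.ofFinrankEq (R := R) _ _ hfr
    have : Function.Injective (e.symm.toLinearMap ∘ₗ φ.toLinearMap) :=
      OrzechProperty.injective_of_surjective_endomorphism _
        (e.symm.surjective.comp hsurj)
    exact fun a b h => this (by simp [h])
  exact ⟨AlgEquiv.ofBijective φ ⟨hinj, hsurj⟩⟩

theorem aux_root {R : Type} [CommRing R] [IsNoetherianRing R] (x : R)
    [IsAdicComplete (Ideal.span {x}) R] (S : Type) [CommRing S] [Algebra R S] [Module.Finite R S]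
    (e : ℕ) (he0 : 0 < e) (he : IsUnit (e : R)) (s : S) : ∃ ρ : S, ρ ^ e = 1 + algebraMap R S x * s := by
  let J : Ideal S := (Ideal.span {x}).map (algebraMap R S)
  have hJ : J = Ideal.span {algebraMap R S x} := by simp [J, Ideal.map_span]
  have hc : IsAdicComplete J S := aux_complete _
  obtain ⟨ρ, h, -⟩ := HenselianRing.is_henselian (I := J) (X ^ e - C (1 + algebraMap R S x * s))
    (monic_X_pow_sub_C _ he0.ne') 1 (by
      simp only [eval_sub, eval_pow, eval_X, one_pow, eval_C, sub_add_cancel_left]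
      rw [hJ]
      exact neg_mem (Ideal.mul_mem_right _ _ (Ideal.mem_span_singleton_self _))) (by
      apply IsUnit.map
      have := he.map (algebraMap R S)
      simpa [derivative_X_pow] using this)
  refine ⟨ρ, ?_⟩
  have := h.eq_zero
  simp only [eval_sub, eval_pow, eval_X, eval_C] at this
  linear_combination this
end

section
/-- approximations of low degree polynomials -/
theorem aux_approx {P R : Type} [CommRing P] [CommRing R] [Algebra P R] (d : R)
    (h : ∀ r : R, ∃ q : P, d ∣ r - algebraMap P R q) (m : ℕ) (f : R[X]) (hf : f.degree < m) :
    ∃ (g : P[X]) (r : R[X]), g.degree < m ∧ f = g.map (algebraMap P R) + C d * r := by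
  choose q r hqr using h
  refine ⟨∑ i ∈ Finset.range m, C (q (f.coeff i)) * X ^ i,
    ∑ i ∈ Finset.range m, C (r (f.coeff i)) * X ^ i, ?_, ?_⟩
  · rw [degree_lt_iff_coeff_zero]
    intro k hk
    rw [finsetSum_coeff]
    apply Finset.sum_eq_zero
    intro i hi
    rw [coeff_C_mul_X_pow, if_neg]
    have := Finset.mem_range.1 hi
    omega
  · rw [Polynomial.map_sum, Finset.mul_sum, ← Finset.sum_add_distrib]
    have hs : f = ∑ i ∈ Finset.range m, monomial i (f.coeff i) := by
      rcases eq_or_ne f 0 with h0 | h0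
      · simp [h0]
      · exact f.as_sum_range' m ((natDegree_lt_iff_degree_lt h0).2 hf)
    conv_lhs => rw [hs]
    refine Finset.sum_congr rfl fun i _ => ?_
    have := hqr (f.coeff i)
    rw [← C_mul_X_pow_eq_monomial]
    have h2 : f.coeff i = algebraMap P R (q (f.coeff i)) + d * r (f.coeff i) := by
      linear_combination this
    conv_lhs => rw [h2]
    simp
    ring

theorem aux_approx_monic {P R : Type} [CommRing P] [CommRing R] [Nontrivial P] [Algebra P R] (d : R)
    (h : ∀ r : R, ∃ q : P, d ∣ r - algebraMap P R q) (f : R[X]) (hf : f.Monic) :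
    ∃ (g : P[X]) (r : R[X]), g.Monic ∧ g.natDegree = f.natDegree ∧
      g.map (algebraMap P R) = f + C d * r := by
  obtain ⟨g, r, h1, h2⟩ := aux_approx d h f.natDegree f.eraseLead (by
    nontriviality R
    have := degree_eraseLead_lt hf.ne_zero
    rwa [degree_eq_natDegree hf.ne_zero] at this)
  have hm : (X ^ f.natDegree + g).Monic := monic_X_pow_add h1
  refine ⟨X ^ f.natDegree + g, -r, hm, ?_, ?_⟩
  · apply natDegree_eq_of_degree_eq_some
    rw [degree_add_eq_left_of_degree_lt, degree_X_pow]
    rwa [degree_X_pow]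
  · have h3 := f.eraseLead_add_C_mul_X_pow
    rw [hf.leadingCoeff] at h3
    rw [Polynomial.map_add, Polynomial.map_pow, map_X]
    conv_rhs => rw [← h3, h2]
    simp
    ring

/-- Clearing denominators by scaling. -/
theorem aux_scale {R A : Type} [CommRing R] [CommRing A] [Algebra R A] [Nontrivial A]
    (M : Submonoid R) [IsLocalization M A] (Pw : R → Prop)
    (hPw : ∀ d ∈ M, ∃ w, Pw w ∧ Associated d w)
    (f : A[X]) (hf : f.Monic) : ∃ (w : R) (F : R[X]), Pw w ∧ F.Monic ∧ F.natDegree = f.natDegree ∧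
      F.map (algebraMap R A) = f.scaleRoots (algebraMap R A w) := by
  classical
  obtain ⟨b, hb⟩ := IsLocalization.exist_integer_multiples_of_finset M
    (Finset.image f.coeff (Finset.range (f.natDegree + 1)))
  obtain ⟨w, hw, u, hu⟩ := hPw b b.2
  have hmonic : (f.scaleRoots (algebraMap R A w)).Monic := (monic_scaleRoots_iff _).2 hf
  have hl : f.scaleRoots (algebraMap R A w) ∈ lifts (algebraMap R A) := by
    rw [lifts_iff_coeff_lifts]
    intro i
    rw [coeff_scaleRoots]
    rcases lt_trichotomy i f.natDegree with hi | hi | hi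
    · obtain ⟨c, hc⟩ := hb (f.coeff i) (Finset.mem_image_of_mem _ (Finset.mem_range.2 (by omega)))
      refine ⟨c * u * w ^ (f.natDegree - i - 1), ?_⟩
      have h1 : f.natDegree - i = (f.natDegree - i - 1) + 1 := by omega
      conv_rhs => rw [h1]
      rw [map_mul, map_mul, map_pow, hc, ← hu, map_mul, Algebra.smul_def]
      ring
    · subst hi
      refine ⟨1, ?_⟩
      simp [hf.leadingCoeff]
    · refine ⟨0, ?_⟩
      simp [coeff_eq_zero_of_natDegree_lt hi]
  obtain ⟨F, h1, h2, h3⟩ := lifts_and_natDegree_eq_and_monic hl hmonic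
  exact ⟨w, F, hw, h3, by rw [h2, natDegree_scaleRoots], h1⟩

/-- Clearing denominators in a Bezout relation. -/
theorem aux_clear {R A : Type} [CommRing R] [CommRing A] [Algebra R A]
    (M : Submonoid R) [IsLocalization M A] (hM : M ≤ nonZeroDivisors R)
    (f g : R[X]) (c : R) (a b : A[X])
    (h : a * f.map (algebraMap R A) + b * g.map (algebraMap R A) = C (algebraMap R A c)) :
    ∃ (d : R) (a' b' : R[X]), d ∈ M ∧ a' * f + b' * g = C (d * c) := by
  obtain ⟨d1, hd1, h1⟩ := IsLocalization.integerNormalization_spec M a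
  obtain ⟨d2, hd2, h2⟩ := IsLocalization.integerNormalization_spec M b
  refine ⟨d1 * d2, C d2 * IsLocalization.integerNormalization M a,
    C d1 * IsLocalization.integerNormalization M b, mul_mem hd1 hd2, ?_⟩
  have hinj : Function.Injective (algebraMap R A) := IsLocalization.injective A hM
  apply Polynomial.map_injective _ hinj
  have e : ∀ (d : R) (q : A[X]), d • q = C (algebraMap R A d) * q := fun d q => by
    ext; simp [Algebra.smul_def]
  rw [Polynomial.map_add, Polynomial.map_mul, Polynomial.map_mul, Polynomial.map_mul,
    Polynomial.map_mul, map_C, map_C, map_C, h1, h2, e, e, map_mul, C_mul, ← h, map_mul, C_mul]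
  ring

/-- From Bezout mod Jacobson to exact Bezout -/
theorem aux_bezout {A : Type} [CommRing A] (ϖ : A) (hϖ : ϖ ∈ Ideal.jacobson (⊥ : Ideal A))
    (f a b c : A[X]) (hf : f.Monic) (h : a * f + b * derivative f = 1 + C ϖ * c) :
    ∃ a' b' : A[X], a' * f + b' * derivative f = 1 := by
  have : Module.Finite A (AdjoinRoot f) := hf.finite_adjoinRoot
  have h1 : IsUnit (AdjoinRoot.mk f (derivative f)) := by
    have h2 : IsUnit (AdjoinRoot.mk f (1 + C ϖ * c)) := by
      set z := AdjoinRoot.mk f (1 + C ϖ * c) with hz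
      have hz' : z = 1 + algebraMap A (AdjoinRoot f) ϖ * AdjoinRoot.mk f c := by
        simp [hz]
      have h4 : (⊤ : Submodule A (AdjoinRoot f)) ≤ (Ideal.span {z}).restrictScalars A := by
        apply Submodule.le_of_le_smul_of_le_jacobson_bot (I := Ideal.span {ϖ}) Module.Finite.fg_top
        · rwa [Ideal.span_singleton_le_iff_mem]
        · intro y _
          have : y = z * y + ϖ • (-(AdjoinRoot.mk f c * y)) := by
            rw [hz', Algebra.smul_def]; ring
          rw [this]
          apply Submodule.add_mem_sup
          · exact Ideal.mul_mem_right _ _ (Ideal.mem_span_singleton_self z)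
          · exact Submodule.smul_mem_smul (Ideal.mem_span_singleton_self _) trivial
      have h5 : (1 : AdjoinRoot f) ∈ Ideal.span {z} := h4 trivial
      rw [Ideal.mem_span_singleton] at h5
      exact isUnit_of_dvd_one h5
    rw [← h, map_add, map_mul, AdjoinRoot.mk_self, mul_zero, zero_add, map_mul] at h2
    exact isUnit_of_mul_isUnit_right h2
  obtain ⟨q, hq⟩ := h1.exists_left_inv
  obtain ⟨b', rfl⟩ := AdjoinRoot.mk_surjective q
  rw [← map_mul, ← map_one (AdjoinRoot.mk f), AdjoinRoot.mk_eq_mk] at hq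
  obtain ⟨k, hk⟩ := hq
  exact ⟨-k, b', by linear_combination hk⟩
end

section
theorem aux_unit {R : Type} [CommRing R] [IsNoetherianRing R] (x : R)
    [IsAdicComplete (Ideal.span {x}) R] (S : Type) [CommRing S] [Algebra R S] [Module.Finite R S]
    (s : S) : IsUnit (1 + algebraMap R S x * s) := by
  let J : Ideal S := (Ideal.span {x}).map (algebraMap R S)
  have hJ : J = Ideal.span {algebraMap R S x} := by simp [J, Ideal.map_span]
  have hc : IsAdicComplete J S := aux_complete _
  have hx : algebraMap R S x ∈ Ideal.jacobson (⊥ : Ideal S) :=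
    IsAdicComplete.le_jacobson_bot J (hJ ▸ Ideal.mem_span_singleton_self _)
  have := Ideal.mem_jacobson_bot.1 hx s
  rwa [add_comm] at this

theorem aux_bezout_scale {A : Type} [CommRing A] (f a b : A[X]) (w δ : A) (hw : IsUnit w)
    (h : a * f + b * derivative f = C δ) :
    ∃ a' b' : A[X], a' * f.scaleRoots w + b' * derivative (f.scaleRoots w) = C δ := by
  obtain ⟨w', hw'⟩ := hw.exists_left_inv
  have e1 : f.scaleRoots w = C (w ^ f.natDegree) * f.comp (C w' * X) := by
    ext i
    rw [coeff_scaleRoots, coeff_C_mul, comp_C_mul_X_coeff]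
    rcases le_or_gt i f.natDegree with hi | hi
    · obtain ⟨k, hk⟩ := Nat.exists_eq_add_of_le hi
      rw [hk, Nat.add_sub_cancel_left, pow_add]
      have : w ^ i * w' ^ i = 1 := by rw [← mul_pow, mul_comm, hw', one_pow]
      linear_combination (-f.coeff i * w ^ k) * this
    · simp [coeff_eq_zero_of_natDegree_lt hi]
  have e2 : derivative (f.scaleRoots w) =
      C (w ^ f.natDegree * w') * (derivative f).comp (C w' * X) := by
    rw [e1, derivative_C_mul, derivative_comp]
    simp
    ring
  have h' := congrArg (fun p => p.comp (C w' * X)) h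
  simp only [add_comp, mul_comp, C_comp] at h'
  refine ⟨C (w' ^ f.natDegree) * a.comp (C w' * X), C (w * w' ^ f.natDegree) * b.comp (C w' * X), ?_⟩
  rw [e2, e1]
  have h3 : (C (w ^ f.natDegree) : A[X]) * C (w' ^ f.natDegree) = 1 := by
    rw [← C_mul, ← mul_pow, mul_comm, hw', one_pow, C_1]
  have h4 : (C w : A[X]) * C w' = 1 := by rw [← C_mul, mul_comm, hw', C_1]
  simp only [C_mul]
  rw [← h']
  linear_combination (a.comp (C w' * X) * f.comp (C w' * X)) * h3 +
    (b.comp (C w' * X) * (derivative f).comp (C w' * X)) * (C w * C w' * h3 + h4)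

set_option maxHeartbeats 1000000 in
theorem aux_residue {P R A Q : Type} [CommRing P] [Nontrivial P] [CommRing R] [IsDomain R] [IsNoetherianRing R]
    [CommRing A] [Nontrivial A] [CommRing Q] [Algebra P R] [Algebra R A] [Algebra R Q] [Algebra A Q] [Algebra P Q]
    [IsScalarTower R A Q] [IsScalarTower P R Q]
    (x ϖ : R) [IsAdicComplete (Ideal.span {x}) R] (hϖ : Prime ϖ) (hx : ¬ ϖ ∣ x)
    (hW1 : ∀ d : R, ¬ ϖ ∣ d → ∃ w : P, Associated d (algebraMap P R w))
    (hW2 : ∀ d : R, ¬ ϖ ∣ d → ∀ r, ∃ q : P, d ∣ r - algebraMap P R q)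
    (M : Submonoid R) (hM : ∀ d, d ∈ M ↔ ¬ ϖ ∣ d) [IsLocalization M A]
    (hjac : algebraMap R A ϖ ∈ Ideal.jacobson (⊥ : Ideal A))
    (f1 a b c : A[X]) (hf1 : f1.Monic) (hab : a * f1 + b * derivative f1 = 1 + C (algebraMap R A ϖ) * c)
    (y1 : Q) (hy1 : aeval y1 f1 = 0) (hgen : ∀ z : Q, ∃ q : A[X], aeval y1 q = z)
    (e : ℕ) (he0 : 0 < e) (he : IsUnit (e : R)) (v : Qˣ) :
    ∃ (f0 u0 : P[X]) (y c : Q), f0.Monic ∧ f0.natDegree = f1.natDegree ∧ aeval y f0 = 0 ∧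
      IsUnit (aeval y (derivative f0)) ∧ (∀ z : Q, ∃ q : A[X], aeval y q = z) ∧
      u0.degree < f0.natDegree ∧ IsUnit c ∧ c ^ e = v * aeval y u0 := by
  have hMu : ∀ d ∈ M, IsUnit (algebraMap R A d) := fun d hd => IsLocalization.map_units A ⟨d, hd⟩
  have hMQ : ∀ d ∈ M, IsUnit (algebraMap R Q d) := fun d hd => by
    rw [IsScalarTower.algebraMap_apply R A Q]; exact (hMu d hd).map _
  have hM0 : M ≤ nonZeroDivisors R := fun d hd => by
    rw [mem_nonZeroDivisors_iff_ne_zero]; rintro rfl; exact (hM 0).1 hd (dvd_zero _)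
  obtain ⟨a1, b1, h1⟩ := aux_bezout _ hjac f1 a b c hf1 hab
  obtain ⟨w, F, hw, hF, hFd, hFm⟩ := aux_scale (A := A) M (fun w => w ∈ M) (fun d hd => ⟨d, hd, Associated.refl d⟩) f1 hf1
  obtain ⟨a2, b2, h2⟩ := aux_bezout_scale f1 a1 b1 _ 1 (hMu w hw) (by rw [h1, C_1])
  rw [← hFm, derivative_map] at h2
  obtain ⟨d, a3, b3, hd, h3⟩ := aux_clear (A := A) M hM0 F (derivative F) 1 a2 b2 (by simpa using h2)
  rw [mul_one] at h3
  have hndvd : ∀ d ∈ M, ¬ ϖ ∣ d * x := fun d hd h => by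
    rcases hϖ.dvd_or_dvd h with h | h
    · exact (hM d).1 hd h
    · exact hx h
  obtain ⟨f0, r, hf0, hf0d, hf0m⟩ := aux_approx_monic (P := P) (d ^ 2 * x) (hW2 _ (hndvd _ (pow_mem hd 2))) F hF
  have hf0R := hf0.map (algebraMap P R)
  have hf0Rd : (f0.map (algebraMap P R)).natDegree = F.natDegree := by rw [hf0.natDegree_map, hf0d]
  obtain ⟨ε⟩ := aux_tougeron x F (f0.map (algebraMap P R)) a3 b3 r d hF hf0R hf0Rd h3 hf0m
  set y1' := algebraMap R Q w * y1 with hy1'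
  have hFy : aeval y1' F = 0 := by
    have : aeval (algebraMap A Q (algebraMap R A w) * y1) (f1.scaleRoots (algebraMap R A w)) = 0 :=
      scaleRoots_aeval_eq_zero hy1
    rw [← hFm, aeval_map_algebraMap, ← IsScalarTower.algebraMap_apply] at this
    exact this
  let φ : AdjoinRoot F →ₐ[R] Q := AdjoinRoot.liftAlgHom F (Algebra.ofId R Q) y1' hFy
  let ψ : AdjoinRoot (f0.map (algebraMap P R)) →ₐ[R] Q := φ.comp ε.toAlgHom
  have : Module.Finite R (AdjoinRoot (f0.map (algebraMap P R))) := hf0R.finite_adjoinRoot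
  set y := ψ (AdjoinRoot.root _) with hy
  have hψ : ∀ q : R[X], ψ (AdjoinRoot.mk _ q) = aeval y q := fun q => by
    rw [← AdjoinRoot.aeval_eq, hy, aeval_algHom_apply]
  have hP : ∀ q : P[X], aeval y (q.map (algebraMap P R)) = aeval y q := fun q => aeval_map_algebraMap _ _ _
  have hy0 : aeval y f0 = 0 := by rw [← hP, ← hψ, AdjoinRoot.mk_self, map_zero]
  have hsurj : ∀ z : Q, ∃ d ∈ M, ∃ s, ψ s = algebraMap R Q d * z := by
    intro z
    obtain ⟨q, rfl⟩ := hgen z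
    obtain ⟨w', hw'⟩ := (hMu w hw).exists_left_inv
    have e1 : aeval y1' (q.comp (C w' * X)) = aeval y1 q := by
      rw [aeval_comp]
      congr 1
      simp only [map_mul, aeval_C, aeval_X, hy1']
      rw [IsScalarTower.algebraMap_apply R A Q, ← mul_assoc, ← map_mul, hw', map_one, one_mul]
    obtain ⟨d1, hd1, h1⟩ := IsLocalization.integerNormalization_spec M (q.comp (C w' * X))
    refine ⟨d1, hd1, ε.symm (AdjoinRoot.mk _ (IsLocalization.integerNormalization M (q.comp (C w' * X)))), ?_⟩
    have : ∀ q : R[X], φ (AdjoinRoot.mk _ q) = aeval y1' q := fun q => by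
      rw [← AdjoinRoot.aeval_eq, ← aeval_algHom_apply]
      congr 1
      congr 1
      exact AdjoinRoot.liftAlgHom_root _ _ _ _
    change φ (ε (ε.symm _)) = _
    rw [AlgEquiv.apply_symm_apply, this, ← e1, ← aeval_map_algebraMap A, h1, ← Algebra.smul_def]
    rw [← algebraMap_smul A d1 (q.comp (C w' * X)), map_smul, algebraMap_smul]
  have hgen' : ∀ z : Q, ∃ q : A[X], aeval y q = z := by
    intro z
    obtain ⟨d, hd, s, hs⟩ := hsurj z
    obtain ⟨q, rfl⟩ := AdjoinRoot.mk_surjective s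
    obtain ⟨w', hw'⟩ := (hMu d hd).exists_left_inv
    refine ⟨C w' * q.map (algebraMap R A), ?_⟩
    rw [map_mul, aeval_map_algebraMap, ← hψ, hs, aeval_C, IsScalarTower.algebraMap_apply R A Q,
      ← mul_assoc, ← map_mul, hw', map_one, one_mul]
  have hunit : ∀ s, IsUnit (1 + algebraMap R Q x * ψ s) := fun s => by
    have := (aux_unit x _ s).map ψ
    rw [map_add, map_one, map_mul, AlgHom.commutes] at this
    exact this
  have hder : IsUnit (aeval y (derivative f0)) := by
    have h4 := congrArg (aeval y) h3
    have h5 : F = f0.map (algebraMap P R) - C (d ^ 2 * x) * r := by rw [hf0m]; ring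
    rw [h5, derivative_sub, derivative_C_mul, derivative_map] at h4
    simp only [map_add, map_mul, map_sub, hP, hy0,
      aeval_C, zero_sub, map_pow] at h4
    have h6 : aeval y b3 * aeval y (derivative f0) = algebraMap R Q d *
      (1 + algebraMap R Q x * ψ (algebraMap R _ d * (AdjoinRoot.mk _ (a3 * r + b3 * derivative r)))) := by
      rw [map_mul, hψ, AlgHom.commutes]
      simp only [map_add, map_mul]
      linear_combination h4
    have h7 := (hMQ d hd).mul (hunit (algebraMap R _ d * (AdjoinRoot.mk _ (a3 * r + b3 * derivative r))))
    rw [← h6] at h7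
    exact isUnit_of_mul_isUnit_right h7
  obtain ⟨d1, hd1, s, hs⟩ := hsurj (↑v⁻¹ : Q)
  obtain ⟨p', hp'⟩ := AdjoinRoot.mk_surjective (algebraMap R _ (d1 ^ (e - 1)) * s)
  have hs' : ψ (AdjoinRoot.mk _ p') = algebraMap R Q d1 ^ e * (↑v⁻¹ : Q) := by
    rw [hp', map_mul, hs, AlgHom.commutes, map_pow, ← mul_assoc, ← pow_succ]
    congr 3; omega
  obtain ⟨V, hV⟩ := (hMQ d1 hd1).pow e |>.mul v⁻¹.isUnit
  obtain ⟨d2, hd2, s2, hs2⟩ := hsurj (↑V⁻¹ : Q)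
  obtain ⟨u0, r0, hu0, hr0⟩ := aux_approx (P := P) (d2 * x) (hW2 _ (hndvd _ hd2)) f0.natDegree
    (p' %ₘ f0.map (algebraMap P R)) (by
      have := degree_modByMonic_lt p' hf0R
      rwa [hf0.degree_map, degree_eq_natDegree hf0.ne_zero] at this)
  obtain ⟨ρ, hρ⟩ := aux_root x _ e he0 he (-(s2 * AdjoinRoot.mk (f0.map (algebraMap P R)) r0))
  have hps : ψ (AdjoinRoot.mk _ p') = aeval y u0 + algebraMap R Q d2 * algebraMap R Q x * aeval y r0 := by
    have h8 : AdjoinRoot.mk (f0.map (algebraMap P R)) p' =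
        AdjoinRoot.mk _ (p' %ₘ f0.map (algebraMap P R)) := by
      conv_lhs => rw [← modByMonic_add_div p' (f0.map (algebraMap P R))]
      rw [map_add, map_mul, AdjoinRoot.mk_self, zero_mul, add_zero]
    rw [h8, hr0, hψ, map_add, hP, map_mul, aeval_C, map_mul]
  refine ⟨f0, u0, y, algebraMap R Q d1 * ψ ρ, hf0, by rw [hf0d, hFd], hy0, hder, hgen', hu0, ?_, ?_⟩
  · refine (hMQ d1 hd1).mul (IsUnit.map ψ ?_)
    have := aux_unit x _ (-(s2 * AdjoinRoot.mk (f0.map (algebraMap P R)) r0))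
    rw [← hρ] at this
    exact (isUnit_pow_iff he0.ne').1 this
  · rw [mul_pow, ← map_pow ψ, hρ]
    simp only [map_add, map_one, map_mul, map_neg, AlgHom.commutes, hs2, hψ]
    have h9 : aeval y u0 = ψ (AdjoinRoot.mk _ p') - algebraMap R Q d2 * algebraMap R Q x * aeval y r0 := by
      rw [hps]; ring
    rw [h9, hs', ← hV]
    have hV1 : (V : Q) * (↑V⁻¹ : Q) = 1 := V.mul_inv
    have hV2 : (v : Q) * V = algebraMap R Q d1 ^ e := by
      rw [hV, mul_comm, mul_assoc, Units.inv_mul, mul_one]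
    rw [← hV2]
    linear_combination (-(v : Q) * algebraMap R Q x * algebraMap R Q d2 * aeval y r0) * hV1
end

section
theorem aux_newton {B : Type} [CommRing B] (π : B) (Φ : B[X]) (s0 w : B) (h0 : π ∣ Φ.eval s0)
    (h1 : π ∣ 1 - (derivative Φ).eval s0 * w) (N : ℕ) :
    ∃ s, π ∣ s - s0 ∧ π ^ (N + 1) ∣ Φ.eval s := by
  induction N with
  | zero => exact ⟨s0, by simp, by simpa using h0⟩
  | succ N ih =>
    obtain ⟨s, hs, k, hk⟩ := ih
    obtain ⟨q, hq⟩ := Φ.binomExpansion s (-(Φ.eval s * w))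
    refine ⟨s + -(Φ.eval s * w), ?_, ?_⟩
    · have : s + -(Φ.eval s * w) - s0 = (s - s0) - π * (π ^ N * k * w) := by rw [hk]; ring
      rw [this]
      exact dvd_sub hs (dvd_mul_right _ _)
    · have h2 : π ∣ 1 - (derivative Φ).eval s * w := by
        have h3 := hs.trans (sub_dvd_eval_sub s s0 (derivative Φ))
        have : 1 - (derivative Φ).eval s * w = (1 - (derivative Φ).eval s0 * w) -
          ((derivative Φ).eval s - (derivative Φ).eval s0) * w := by ring
        rw [this]
        exact dvd_sub h1 (h3.mul_right _)
      obtain ⟨l, hl⟩ := h2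
      rw [hq]
      have : eval s Φ + eval s (derivative Φ) * -(eval s Φ * w) + q * (-(eval s Φ * w)) ^ 2 =
        eval s Φ * (1 - (derivative Φ).eval s * w) + q * (eval s Φ) ^ 2 * w ^ 2 := by ring
      rw [this, hl, hk]
      exact ⟨k * l + q * π ^ N * k ^ 2 * w ^ 2, by ring⟩

theorem aux_hensel {P B : Type} [CommRing P] [CommRing B] [Algebra P B] (π : B)
    (f0 u0 : P[X]) (ϖ0 : P) (v : B) (e : ℕ) (he0 : 0 < e) (he : IsUnit (e : B))
    (hϖ : algebraMap P B ϖ0 = π ^ e * v) (y c : B ⧸ Ideal.span {π}) (hy : aeval y f0 = 0)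
    (hder : IsUnit (aeval y (derivative f0))) (hc : IsUnit c)
    (hcv : c ^ e = Ideal.Quotient.mk _ v * aeval y u0) (N : ℕ) :
    ∃ α ρ : B, Ideal.Quotient.mk _ α = y ∧ aeval α f0 = π * ρ ∧
      Ideal.Quotient.mk (Ideal.span {π}) ρ = c ∧
      π ^ N ∣ aeval α (f0 ^ e - C ϖ0 * u0) := by
  obtain ⟨η, rfl⟩ := Ideal.Quotient.mk_surjective y
  obtain ⟨c0, rfl⟩ := Ideal.Quotient.mk_surjective c
  have hae : ∀ (q : P[X]) (z : B), aeval (Ideal.Quotient.mk (Ideal.span {π}) z) q =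
      Ideal.Quotient.mk (Ideal.span {π}) (aeval z q) := fun q z =>
    aeval_algHom_apply (Ideal.Quotient.mkₐ P (Ideal.span {π})) z q
  have hmk : ∀ z : B, Ideal.Quotient.mk (Ideal.span {π}) z = 0 ↔ π ∣ z := fun z => by
    rw [Ideal.Quotient.eq_zero_iff_mem, Ideal.mem_span_singleton]
  rw [hae] at hy hder hcv
  obtain ⟨r, hr⟩ := (hmk _).1 hy
  obtain ⟨D, hD⟩ := hder.exists_left_inv
  obtain ⟨D, rfl⟩ := Ideal.Quotient.mk_surjective D
  obtain ⟨c', hc'⟩ := hc.exists_left_inv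
  obtain ⟨c', rfl⟩ := Ideal.Quotient.mk_surjective c'
  obtain ⟨e', he'⟩ := he.exists_left_inv
  obtain ⟨k, hk⟩ := (f0.map (algebraMap P B[X])).binomExpansion (C η) (C π * X)
  set F1 := aeval η (derivative f0) with hF1
  set G : B[X] := C r + C F1 * X + k * C π * X ^ 2 with hG
  have hev : ∀ (q : P[X]) (s : B), (eval (C η + C π * X) (q.map (algebraMap P B[X]))).eval s =
      aeval (η + π * s) q := by
    intro q s
    rw [← coe_evalRingHom, eval_map, hom_eval₂, aeval_def]
    congr 1
    · ext; simp [IsScalarTower.algebraMap_apply P B B[X]]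
    · simp
  have hC : ∀ q : P[X], eval (C η) (q.map (algebraMap P B[X])) = C (aeval η q) := by
    intro q
    rw [eval_map, aeval_def, hom_eval₂]
    rfl
  have hfG : eval (C η + C π * X) (f0.map (algebraMap P B[X])) = C π * G := by
    rw [hk, derivative_map, hC, hC, hr, hG, C_mul]; ring
  set U : B[X] := eval (C η + C π * X) (u0.map (algebraMap P B[X])) with hU
  set Φ : B[X] := G ^ e - C v * U with hΦ
  set s0 := D * (c0 - r) with hs0
  have hGs : ∀ s, π ∣ s - s0 → π ∣ G.eval s - c0 := by
    intro s hs
    rw [← hmk, map_sub, sub_eq_zero] at hs ⊢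
    have hπ : Ideal.Quotient.mk (Ideal.span {π}) π = 0 := (hmk _).2 dvd_rfl
    simp only [hG, eval_add, eval_mul, eval_C, eval_X, eval_pow, map_add, map_mul, hs, hπ, hs0, map_sub]
    linear_combination (Ideal.Quotient.mk (Ideal.span {π}) c0 - Ideal.Quotient.mk (Ideal.span {π}) r) * hD
  have hUs : ∀ s, π ∣ U.eval s - aeval η u0 := by
    intro s
    rw [hU, hev]
    rw [← hmk, map_sub, sub_eq_zero, ← hae, ← hae, map_add, map_mul, (hmk π).2 dvd_rfl, zero_mul, add_zero]
  obtain ⟨k2, hk2⟩ := (u0.map (algebraMap P B[X])).binomExpansion (C η) (C π * X)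
  have hΦ0 : ∀ s, Φ.eval s = (G.eval s) ^ e - v * U.eval s := fun s => by simp [hΦ]
  have hπ : Ideal.Quotient.mk (Ideal.span {π}) π = 0 := (hmk _).2 dvd_rfl
  have hG0 := hGs s0 (by simp)
  rw [← hmk, map_sub, sub_eq_zero] at hG0
  have hU0 := hUs s0
  rw [← hmk, map_sub, sub_eq_zero] at hU0
  have h0 : π ∣ Φ.eval s0 := by
    rw [← hmk, hΦ0, map_sub, map_pow, map_mul, hG0, hU0, hcv, sub_self]
  have h1 : π ∣ 1 - (derivative Φ).eval s0 * (e' * c' ^ (e - 1) * D) := by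
    rw [← hmk, map_sub, map_one, map_mul]
    have : Ideal.Quotient.mk (Ideal.span {π}) (eval s0 (derivative Φ)) =
        Ideal.Quotient.mk (Ideal.span {π}) (e * c0 ^ (e - 1) * F1) := by
      have hU1 : U = C (aeval η u0) + C π * (C (aeval η (derivative u0)) * X + k2 * C π * X ^ 2) := by
        rw [hU, hk2, derivative_map, hC, hC]; ring
      have hG1 : G = C r + C F1 * X + C π * (k * X ^ 2) := by rw [hG]; ring
      have hG2 : (derivative G) = C F1 + C π * derivative (k * X ^ 2) := by
        rw [hG1]; simp only [derivative_add, derivative_C_mul, derivative_C, derivative_X]; ring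
      have hU2 : derivative U = C π * derivative (C (aeval η (derivative u0)) * X + k2 * C π * X ^ 2) := by
        rw [hU1, derivative_add, derivative_C_mul, derivative_C, zero_add]
      rw [hΦ, derivative_sub, derivative_pow, derivative_C_mul, hU2, hG2]
      simp only [eval_sub, eval_mul, eval_C, eval_pow, eval_add, map_sub, map_mul, map_add, hπ, hG0,
        map_pow, zero_mul, mul_zero, sub_zero, add_zero]
    rw [this]
    have he'' := congrArg (Ideal.Quotient.mk (Ideal.span {π})) he'
    have h3 : Ideal.Quotient.mk (Ideal.span {π}) c' ^ (e - 1) *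
      Ideal.Quotient.mk (Ideal.span {π}) c0 ^ (e - 1) = 1 := by rw [← mul_pow, hc', one_pow]
    simp only [map_mul, map_pow, map_one] at he'' ⊢
    have : ∀ a b c d x y : B ⧸ Ideal.span {π}, a * b = 1 → c * d = 1 → x * y = 1 →
      1 - b * d * y * (a * c * x) = 0 := by
      intro a b c d x y h1 h2 h3
      linear_combination -h1 - a * b * h2 - a * b * c * d * h3
    exact this _ _ _ _ _ _ he'' h3 hD
  obtain ⟨s, hs, hsN⟩ := aux_newton π Φ s0 _ h0 h1 N
  have hα : aeval (η + π * s) f0 = π * G.eval s := by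
    rw [← hev, hfG, eval_mul, eval_C]
  refine ⟨η + π * s, G.eval s, ?_, hα, ?_, ?_⟩
  · rw [map_add, map_mul, hπ, zero_mul, add_zero]
  · have := hGs s hs
    rwa [← hmk, map_sub, sub_eq_zero] at this
  · rw [map_sub, map_mul, map_pow, hα, aeval_C, hϖ, ← hev u0, ← hU]
    have : (π * eval s G) ^ e - π ^ e * v * eval s U = π ^ e * Φ.eval s := by rw [hΦ0]; ring
    rw [this]
    exact ((pow_dvd_pow π (Nat.le_succ N)).trans hsN).mul_left _
end

section
theorem aux_gen {A B : Type} [CommRing A] [CommRing B] [Algebra A B] [Module.Finite A B]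
    (π : B) (ϖ : A) (hjac : ϖ ∈ Ideal.jacobson (⊥ : Ideal A)) (e : ℕ)
    (hϖ : algebraMap A B ϖ ∣ π ^ e) (S : Subalgebra A B) (ρ : B) (hβ : π * ρ ∈ S)
    (hρ : IsUnit (Ideal.Quotient.mk (Ideal.span {π}) ρ))
    (hS : ∀ z, ∃ s ∈ S, π ∣ z - s) : S = ⊤ := by
  have hmk : ∀ z : B, Ideal.Quotient.mk (Ideal.span {π}) z = 0 ↔ π ∣ z := fun z => by
    rw [Ideal.Quotient.eq_zero_iff_mem, Ideal.mem_span_singleton]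
  obtain ⟨ρ', hρ'⟩ := hρ.exists_left_inv
  obtain ⟨ρ', rfl⟩ := Ideal.Quotient.mk_surjective ρ'
  have key : ∀ i z, ∃ s ∈ S, π ^ i ∣ z - s := by
    intro i
    induction i with
    | zero => exact fun z => ⟨0, zero_mem _, by simp⟩
    | succ i ih =>
      intro z
      obtain ⟨s, hs, k, hk⟩ := ih z
      obtain ⟨s', hs', h'⟩ := hS (ρ' ^ i * k)
      refine ⟨s + (π * ρ) ^ i * s', add_mem hs (mul_mem (pow_mem hβ i) hs'), ?_⟩
      have : z - (s + (π * ρ) ^ i * s') = π ^ i * (k - ρ ^ i * s') := by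
        rw [← sub_sub, hk]; ring
      rw [this, pow_succ]
      apply mul_dvd_mul_left
      rw [← hmk, map_sub, sub_eq_zero] at h' ⊢
      rw [map_mul, ← h', map_mul, ← mul_assoc, map_pow, map_pow, ← mul_pow, mul_comm (Ideal.Quotient.mk _ ρ),
        hρ', one_pow, one_mul]
  rw [eq_top_iff]
  change (⊤ : Submodule A B) ≤ Subalgebra.toSubmodule S
  apply Submodule.le_of_le_smul_of_le_jacobson_bot (I := Ideal.span {ϖ}) Module.Finite.fg_top
  · rwa [Ideal.span_singleton_le_iff_mem]
  · intro z _
    obtain ⟨s, hs, hz⟩ := key e z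
    obtain ⟨k, hk⟩ := hϖ.trans hz
    have : z = s + ϖ • k := by rw [Algebra.smul_def, ← hk]; ring
    rw [this]
    exact Submodule.add_mem_sup hs (Submodule.smul_mem_smul (Ideal.mem_span_singleton_self _) trivial)
end

section
theorem aux_adj {A F E B : Type} [CommRing A] [IsDomain A] [Field F] [Algebra A F] [IsFractionRing A F]
    [Field E] [Algebra F E] [Algebra A E] [IsScalarTower A F E] [FiniteDimensional F E]
    [CommRing B] [Algebra A B] [Algebra B E] [IsScalarTower A B E] [IsIntegralClosure B A E]
    (α : B) (hα : Algebra.adjoin A {α} = ⊤) : Algebra.adjoin F {algebraMap B E α} = ⊤ := by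
  rw [eq_top_iff]
  rintro z -
  have hz : IsAlgebraic A z := by
    have := Algebra.IsAlgebraic.isAlgebraic (R := F) z
    exact (IsFractionRing.isAlgebraic_iff A F E).2 this
  obtain ⟨d, hd, hdz⟩ := hz.exists_integral_multiple
  have hb : IsIntegralClosure.mk' B (d • z) hdz ∈ Algebra.adjoin A {α} := by rw [hα]; trivial
  have h2 : d • z ∈ Algebra.adjoin F {algebraMap B E α} := by
    rw [← IsIntegralClosure.algebraMap_mk' B (d • z) hdz]
    generalize IsIntegralClosure.mk' B (d • z) hdz = b at hb
    induction hb using Algebra.adjoin_induction with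
    | mem x hx => rw [Set.mem_singleton_iff.1 hx]; exact Algebra.self_mem_adjoin_singleton _ _
    | algebraMap r =>
      rw [← IsScalarTower.algebraMap_apply, IsScalarTower.algebraMap_apply A F E]
      exact Subalgebra.algebraMap_mem _ _
    | add x y _ _ hx hy => rw [map_add]; exact add_mem hx hy
    | mul x y _ _ hx hy => rw [map_mul]; exact mul_mem hx hy
  have hd' : algebraMap A F d ≠ 0 := by
    rwa [Ne, FaithfulSMul.algebraMap_eq_zero_iff]
  have : z = (algebraMap A F d)⁻¹ • (d • z) := by
    rw [← algebraMap_smul F d z, smul_smul, inv_mul_cancel₀ hd', one_smul]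
  rw [this]
  exact Subalgebra.smul_mem _ h2 _

theorem aux_diff {A F E B : Type} [CommRing A] [IsDomain A] [IsDiscreteValuationRing A] [Field F]
    [Algebra A F] [IsFractionRing A F]
    [Field E] [Algebra F E] [Algebra A E] [IsScalarTower A F E] [FiniteDimensional F E]
    [Algebra.IsSeparable F E]
    [CommRing B] [IsDedekindDomain B] [Algebra A B] [Module.Finite A B]
    [Algebra B E] [IsScalarTower A B E] [IsIntegralClosure B A E]
    (ϖ : A) (hϖ : Irreducible ϖ) : ∃ a0 : ℕ, ∀ α : B, Algebra.adjoin A {α} = ⊤ →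
      ∃ a b : A[X], a * minpoly A α + b * derivative (minpoly A α) = C (ϖ ^ a0) := by
  have : IsFractionRing B E := IsIntegralClosure.isFractionRing_of_finite_extension A F E B
  have : FaithfulSMul A E := by
    rw [faithfulSMul_iff_algebraMap_injective, IsScalarTower.algebraMap_eq A F E]
    exact (algebraMap F E).injective.comp (IsFractionRing.injective A F)
  have hinj : Function.Injective (algebraMap A B) := by
    have := FaithfulSMul.algebraMap_injective A E
    rw [IsScalarTower.algebraMap_eq A B E] at this
    exact Function.Injective.of_comp this
  have : FaithfulSMul A B := (faithfulSMul_iff_algebraMap_injective A B).2 hinj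
  have : Module.IsTorsionFree A B := inferInstance
  have hne : differentIdeal A B ≠ ⊥ := by
    rw [Ne, ← FractionalIdeal.coeIdeal_inj (K := E), coeIdeal_differentIdeal A F]
    simp
  have hne' : (differentIdeal A B).comap (algebraMap A B) ≠ ⊥ := by
    obtain ⟨z, hz, hz0⟩ := Submodule.exists_mem_ne_zero_of_ne_bot hne
    exact Ideal.comap_ne_bot_of_integral_mem hz0 hz (Algebra.IsIntegral.isIntegral z)
  obtain ⟨a0, ha0⟩ := (IsDiscreteValuationRing.ideal_eq_span_pow_irreducible hne' hϖ)
  refine ⟨a0, fun α hα => ?_⟩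
  have h1 : ϖ ^ a0 ∈ (differentIdeal A B).comap (algebraMap A B) := by
    rw [ha0]; exact Ideal.mem_span_singleton_self _
  have h2 := conductor_mul_differentIdeal A F E α (aux_adj α hα)
  rw [conductor_eq_top_of_adjoin_eq_top hα, Ideal.top_mul] at h2
  rw [Ideal.mem_comap, h2, Ideal.mem_span_singleton] at h1
  obtain ⟨z, hz⟩ := h1
  have hz' : z ∈ Algebra.adjoin A {α} := by rw [hα]; trivial
  rw [Algebra.adjoin_singleton_eq_range_aeval] at hz'
  obtain ⟨b, rfl⟩ := hz'
  have h3 : aeval α (C (ϖ ^ a0) - b * derivative (minpoly A α)) = 0 := by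
    rw [map_sub, aeval_C, hz, map_mul, mul_comm]; simp
  obtain ⟨a, ha⟩ := minpoly.isIntegrallyClosed_dvd (Algebra.IsIntegral.isIntegral α) h3
  exact ⟨a, b, by rw [mul_comm a, ← ha]; ring⟩
end

section
theorem aux_degC {R : Type} [CommRing R] (a : R) (p : R[X]) : (C a * p).degree ≤ p.degree := by
  rw [← smul_eq_C_mul]; exact degree_smul_le a p

set_option maxHeartbeats 1000000 in
theorem aux_final {P R A F E B : Type} [CommRing P] [Nontrivial P] [CommRing R] [IsDomain R] [IsNoetherianRing R]
    [CommRing A] [IsDomain A] [IsIntegrallyClosed A] [Algebra P R] [Algebra R A]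
    [Field F] [Algebra A F] [IsFractionRing A F] [Field E] [Algebra F E] [Algebra A E]
    [IsScalarTower A F E] [FiniteDimensional F E] [Algebra R E] [IsScalarTower R A E]
    [CommRing B] [IsDomain B] [Algebra A B] [Module.Finite A B] [FaithfulSMul A B] [Algebra B E]
    [IsScalarTower A B E] [IsIntegralClosure B A E]
    (x ϖ : R) [IsAdicComplete (Ideal.span {x}) R] (hϖ : Prime ϖ) (hx : ¬ ϖ ∣ x)
    (ϖ0 : P) (hϖ0 : algebraMap P R ϖ0 = ϖ)
    (hW1 : ∀ d : R, ¬ ϖ ∣ d → ∃ w : P, Associated d (algebraMap P R w))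
    (hW2 : ∀ d : R, ¬ ϖ ∣ d → ∀ r, ∃ q : P, d ∣ r - algebraMap P R q)
    (M : Submonoid R) (hM : ∀ d, d ∈ M ↔ ¬ ϖ ∣ d) [IsLocalization M A]
    (α : B) (hα : Algebra.adjoin A {α} = ⊤) (a0 : ℕ) (a b : A[X])
    (hab : a * minpoly A α + b * derivative (minpoly A α) = C (algebraMap R A ϖ ^ a0))
    (h : P[X]) (hh : h.Monic) (hhd : h.natDegree = Module.finrank F E)
    (hhα : algebraMap A B (algebraMap R A ϖ ^ (2 * a0)) ∣
      aeval α (h.map ((algebraMap R A).comp (algebraMap P R)))) :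
    ∃ (g : P[X]) (β : E), g.Monic ∧ g.natDegree = Module.finrank F E ∧
      aeval β (g.map (algebraMap P R)) = 0 ∧ IntermediateField.adjoin F {β} = ⊤ := by
  have hMu : ∀ d ∈ M, IsUnit (algebraMap R A d) := fun d hd => IsLocalization.map_units A ⟨d, hd⟩
  have hM0 : M ≤ nonZeroDivisors R := fun d hd => by
    rw [mem_nonZeroDivisors_iff_ne_zero]; rintro rfl; exact (hM 0).1 hd (dvd_zero _)
  have hinj : Function.Injective (algebraMap R A) := IsLocalization.injective A hM0
  set n := Module.finrank F E with hn
  set f := minpoly A α with hf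
  have hαint : IsIntegral A α := Algebra.IsIntegral.isIntegral α
  have hfm : f.Monic := minpoly.monic hαint
  have hadj := aux_adj (F := F) (E := E) α hα
  have hadj' : IntermediateField.adjoin F {algebraMap B E α} = ⊤ := by
    rw [eq_top_iff]
    intro z _
    have : z ∈ Algebra.adjoin F {algebraMap B E α} := by rw [hadj]; trivial
    exact IntermediateField.algebra_adjoin_le_adjoin F _ this
  have hBE : Function.Injective (algebraMap B E) := IsIntegralClosure.algebraMap_injective B A E
  have hfE : minpoly A (algebraMap B E α) = f := minpoly.algebraMap_eq hBE α
  have hαE : IsIntegral A (algebraMap B E α) := hαint.algebraMap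
  have hfd : f.natDegree = n := by
    have h1 := minpoly.isIntegrallyClosed_eq_field_fractions F E hαE
    rw [hfE, Algebra.algebraMap_self, RingHom.id_apply] at h1
    have h2 := IntermediateField.adjoin.finrank (K := F) (x := algebraMap B E α)
      (IsIntegral.of_finite F _)
    rw [hadj', IntermediateField.finrank_top', h1, hfm.natDegree_map] at h2
    exact h2.symm
  set hA := h.map ((algebraMap R A).comp (algebraMap P R)) with hhA
  have hhAm : hA.Monic := hh.map _
  have hhAd : hA.natDegree = n := by rw [hhA, hh.natDegree_map, hhd]
  -- `f` and `h` agree modulo a power of `ϖ`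
  obtain ⟨q, hq⟩ : ∃ q : A[X], hA = f + C (algebraMap R A ϖ ^ (2 * a0)) * q := by
    obtain ⟨z, hz⟩ := hhα
    have hz' : z ∈ Algebra.adjoin A {α} := by rw [hα]; trivial
    rw [Algebra.adjoin_singleton_eq_range_aeval] at hz'
    obtain ⟨q, rfl⟩ := hz'
    refine ⟨q %ₘ f, ?_⟩
    have h1 : aeval α (q %ₘ f) = aeval α q := by
      conv_rhs => rw [← modByMonic_add_div q f]
      rw [map_add, map_mul, minpoly.aeval, zero_mul, add_zero]
    have h2 : aeval α (hA - f - C (algebraMap R A ϖ ^ (2 * a0)) * (q %ₘ f)) = 0 := by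
      rw [map_sub, map_sub, map_mul, h1, minpoly.aeval, aeval_C, hz]; simp
    have h3 := minpoly.isIntegrallyClosed_dvd hαint h2
    have h4 : hA - f - C (algebraMap R A ϖ ^ (2 * a0)) * (q %ₘ f) = 0 := by
      by_contra h0
      have h5 := degree_le_of_dvd h3 h0
      have h6 : (hA - f - C (algebraMap R A ϖ ^ (2 * a0)) * (q %ₘ f)).degree < f.degree := by
        refine (degree_sub_le _ _).trans_lt (max_lt ?_ ?_)
        · have : hA.degree = f.degree := by
            rw [degree_eq_natDegree hhAm.ne_zero, degree_eq_natDegree hfm.ne_zero, hhAd, hfd]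
          rw [← this]
          exact degree_sub_lt this hhAm.ne_zero (by rw [hhAm.leadingCoeff, hfm.leadingCoeff])
        · refine (aux_degC _ _).trans_lt (degree_modByMonic_lt q hfm)
      exact absurd h5 (not_le.2 h6)
    linear_combination h4
  obtain ⟨w, G, ⟨hwM, w0, hw0⟩, hG, hGd, hGm⟩ := aux_scale (A := A) M
    (fun w => w ∈ M ∧ ∃ w0, algebraMap P R w0 = w) (fun d hd => by
      obtain ⟨w0, hw0⟩ := hW1 d ((hM d).1 hd)
      refine ⟨_, ⟨?_, w0, rfl⟩, hw0⟩
      rw [hM, ← hw0.dvd_iff_dvd_right]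
      exact (hM d).1 hd) f hfm
  obtain ⟨a2, b2, h2⟩ := aux_bezout_scale f a b _ _ (hMu w hwM) hab
  rw [← hGm, derivative_map, ← map_pow] at h2
  obtain ⟨d, a3, b3, hd, h3⟩ := aux_clear (A := A) M hM0 G (derivative G) _ a2 b2 h2
  set h1 := h.scaleRoots w0 with hh1
  have hh1m : h1.Monic := (monic_scaleRoots_iff _).2 hh
  have hh1d : h1.natDegree = n := by rw [hh1, natDegree_scaleRoots, hhd]
  have hh1Rm := hh1m.map (algebraMap P R)
  have hh1A : (h1.map (algebraMap P R)).map (algebraMap R A) = hA.scaleRoots (algebraMap R A w) := by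
    ext i
    rw [Polynomial.map_map, coeff_map, hh1, coeff_scaleRoots, coeff_scaleRoots, hhA, coeff_map, ← hhA, hhAd, hhd,
      ← hw0]
    simp
  have hdvd : ∀ (N : ℕ) (r : R), algebraMap R A ϖ ^ N ∣ algebraMap R A r → ϖ ^ N ∣ r := by
    rintro N r ⟨z, hz⟩
    obtain ⟨⟨s, m⟩, hs⟩ := IsLocalization.surj M z
    have h5 : m * r = ϖ ^ N * s := by
      apply hinj
      rw [map_mul, map_mul, hz, ← hs, map_pow]; ring
    exact hϖ.pow_dvd_of_dvd_mul_left N ((hM m).1 m.2) ⟨s, h5⟩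
  obtain ⟨r, hr⟩ : C (ϖ ^ (2 * a0)) ∣ G - h1.map (algebraMap P R) := by
    rw [C_dvd_iff_dvd_coeff]
    intro i
    apply hdvd
    rw [← coeff_map, Polynomial.map_sub, hGm, hh1A, coeff_sub, coeff_scaleRoots, coeff_scaleRoots, hhAd,
      hfd, hq, coeff_add, coeff_C_mul]
    exact ⟨-(q.coeff i * (algebraMap R A) w ^ (n - i)), by ring⟩
  have hϖN : ϖ ^ (2 * a0) ≠ 0 := pow_ne_zero _ hϖ.ne_zero
  have hrd : r.degree < n := by
    have h4 : r.degree = (G - h1.map (algebraMap P R)).degree := by rw [hr, degree_C_mul hϖN]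
    have h5 : G.degree = (h1.map (algebraMap P R)).degree := by
      rw [degree_eq_natDegree hG.ne_zero, degree_eq_natDegree hh1Rm.ne_zero, hGd, hfd,
        hh1m.natDegree_map, hh1d]
    rw [h4, ← hfd, ← hGd, ← degree_eq_natDegree hG.ne_zero]
    exact degree_sub_lt h5 hG.ne_zero (by rw [hG.leadingCoeff, hh1Rm.leadingCoeff])
  have hndvd : ¬ ϖ ∣ d ^ 2 * x := fun h => by
    rcases hϖ.dvd_or_dvd h with h | h
    · exact (hM _).1 (pow_mem hd 2) h
    · exact hx h
  obtain ⟨r0, r1, hr0, hr1⟩ := aux_approx (P := P) (d ^ 2 * x) (hW2 _ hndvd) n r hrd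
  set g := h1 + C (ϖ0 ^ (2 * a0)) * r0 with hg
  have hgd' : (C (ϖ0 ^ (2 * a0)) * r0).degree < h1.degree := by
    rw [degree_eq_natDegree hh1m.ne_zero, hh1d]
    exact (aux_degC _ _).trans_lt hr0
  have hgm : g.Monic := hh1m.add_of_left hgd'
  have hgd : g.natDegree = n := by rw [hg, natDegree_add_eq_left_of_degree_lt hgd', hh1d]
  have hgG : g.map (algebraMap P R) = G + C ((d * ϖ ^ a0) ^ 2 * x) * (-r1) := by
    rw [hg, Polynomial.map_add, Polynomial.map_mul, map_C, map_pow, hϖ0]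
    have e1 : (d * ϖ ^ a0) ^ 2 * x = ϖ ^ (2 * a0) * (d ^ 2 * x) := by ring
    rw [e1, C_mul]
    linear_combination -hr - C (ϖ ^ (2 * a0)) * hr1
  obtain ⟨ε⟩ := aux_tougeron x G (g.map (algebraMap P R)) a3 b3 _ _ hG (hgm.map _)
    (by rw [hgm.natDegree_map, hgd, hGd, hfd]) h3 hgG
  set γ := algebraMap R E w * algebraMap B E α with hγ
  have hGγ : aeval γ G = 0 := by
    have h7 : aeval (algebraMap B E α) f = 0 := by rw [← hfE]; exact minpoly.aeval _ _
    have : aeval (algebraMap A E (algebraMap R A w) * algebraMap B E α) (f.scaleRoots (algebraMap R A w)) = 0 :=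
      scaleRoots_aeval_eq_zero h7
    rw [← hGm, aeval_map_algebraMap, ← IsScalarTower.algebraMap_apply] at this
    exact this
  let φ : AdjoinRoot G →ₐ[R] E := AdjoinRoot.liftAlgHom G (Algebra.ofId R E) γ hGγ
  let θ : AdjoinRoot (g.map (algebraMap P R)) →ₐ[R] E := φ.comp ε.toAlgHom
  set β := θ (AdjoinRoot.root _) with hβ
  have hθ : ∀ q : R[X], θ (AdjoinRoot.mk _ q) = aeval β q := fun q => by
    rw [← AdjoinRoot.aeval_eq, hβ, aeval_algHom_apply]
  refine ⟨g, β, hgm, hgd, by rw [← hθ, AdjoinRoot.mk_self, map_zero], ?_⟩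
  rw [eq_top_iff, ← hadj', IntermediateField.adjoin_simple_le_iff]
  obtain ⟨q1, hq1⟩ := AdjoinRoot.mk_surjective (ε.symm (AdjoinRoot.root G))
  have h8 : γ = aeval β q1 := by
    rw [← hθ, hq1]
    change _ = φ (ε (ε.symm _))
    rw [AlgEquiv.apply_symm_apply]
    exact (AdjoinRoot.liftAlgHom_root _ _ _ _).symm
  have hRF : ∀ r : R, algebraMap R E r = algebraMap F E (algebraMap A F (algebraMap R A r)) := fun r => by
    rw [← IsScalarTower.algebraMap_apply, ← IsScalarTower.algebraMap_apply]
  have h9 : γ ∈ IntermediateField.adjoin F {β} := by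
    rw [h8, aeval_eq_sum_range]
    refine sum_mem fun i _ => ?_
    rw [Algebra.smul_def, hRF]
    exact mul_mem (IntermediateField.algebraMap_mem _ _)
      (pow_mem (IntermediateField.mem_adjoin_simple_self F β) _)
  have hw' : algebraMap R E w ≠ 0 := by
    rw [IsScalarTower.algebraMap_apply R A E]
    exact ((hMu w hwM).map _).ne_zero
  have h10 : algebraMap B E α = (algebraMap R E w)⁻¹ * γ := by
    rw [hγ, ← mul_assoc, inv_mul_cancel₀ hw', one_mul]
  rw [h10, hRF]
  exact mul_mem (inv_mem (IntermediateField.algebraMap_mem _ _)) h9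
end

section
theorem aux_sep {κ L : Type} [Field κ] [Field L] [Algebra κ L] [FiniteDimensional κ L] (p : ℕ) (hp : p.Prime)
    [CharP κ p] (h : ¬ p ∣ Module.finrank κ L) : Algebra.IsSeparable κ L := by
  have : Fact p.Prime := ⟨hp⟩
  have : ExpChar κ p := ExpChar.prime hp
  rw [isSeparable_iff_finInsepDegree_eq_one]
  obtain ⟨k, hk⟩ := finInsepDegree_eq_pow κ L p
  rcases Nat.eq_zero_or_pos k with rfl | hk0
  · simpa using hk
  · exfalso
    apply h
    rw [← Field.finSepDegree_mul_finInsepDegree κ L, hk]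
    exact (dvd_pow_self p hk0.ne').mul_left _

theorem aux_prim {κ : Type} [Field κ] [Infinite κ] (p : ℕ) (hp : p.Prime) [CharP κ p] (m : ℕ) (hm : ¬ p ∣ m)
    {ι : Type} [Fintype ι] (L : ι → Type) [∀ i, Field (L i)] [∀ i, Algebra κ (L i)]
    [∀ i, FiniteDimensional κ (L i)] (hL : ∀ i, Module.finrank κ (L i) = m) :
    ∃ (f : κ[X]) (θ : ∀ i, L i), f.Monic ∧ f.natDegree = Fintype.card ι * m ∧ f.Separable ∧
      (∀ i, aeval (θ i) f = 0) ∧ ∀ z : ∀ i, L i, ∃ q : κ[X], ∀ i, aeval (θ i) q = z i := by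
  have hsep : ∀ i, Algebra.IsSeparable κ (L i) := fun i => aux_sep p hp (by rwa [hL])
  have hm0 : (m : κ) ≠ 0 := by rwa [Ne, CharP.cast_eq_zero_iff κ p]
  obtain ⟨τ⟩ : Nonempty (ι ↪ κ) :=
    ⟨((Fintype.equivFin ι).toEmbedding.trans Fin.valEmbedding).trans (Infinite.natEmbedding κ)⟩
  have key : ∀ i, ∃ θ : L i, IntermediateField.adjoin κ {θ} = ⊤ ∧ Algebra.trace κ (L i) θ = τ i := by
    intro i
    obtain ⟨θ, hθ⟩ := Field.exists_primitive_element κ (L i)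
    set c := (τ i - Algebra.trace κ (L i) θ) / m with hc
    refine ⟨θ + algebraMap κ (L i) c, ?_, ?_⟩
    · rw [eq_top_iff, ← hθ, IntermediateField.adjoin_simple_le_iff]
      have h1 := IntermediateField.mem_adjoin_simple_self κ (θ + algebraMap κ (L i) c)
      have h2 := sub_mem h1 (IntermediateField.algebraMap_mem (IntermediateField.adjoin κ {θ + algebraMap κ (L i) c}) c)
      simpa using h2
    · rw [map_add, Algebra.trace_algebraMap, hL, hc, nsmul_eq_mul]
      field_simp
      ring
  choose θ hθ hτ using key
  have hint : ∀ i, IsIntegral κ (θ i) := fun i => IsIntegral.of_finite κ _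
  have hcop : Pairwise (Function.onFun IsCoprime (fun i => minpoly κ (θ i))) := by
    intro i j hij
    change IsCoprime (minpoly κ (θ i)) (minpoly κ (θ j))
    refine (minpoly.irreducible (hint i)).isCoprime_or_dvd _ |>.resolve_right fun hd => ?_
    have h1 : minpoly κ (θ i) = minpoly κ (θ j) := by
      have := (minpoly.irreducible (hint i)).associated_of_dvd (minpoly.irreducible (hint j)) hd
      exact eq_of_monic_of_associated (minpoly.monic (hint i)) (minpoly.monic (hint j)) this
    have h2 : ∀ i, Algebra.trace κ (L i) (θ i) = -(minpoly κ (θ i)).nextCoeff := fun i => by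
      rw [trace_eq_finrank_mul_minpoly_nextCoeff, hθ, IntermediateField.finrank_top, Nat.cast_one, one_mul]
    apply hij
    apply τ.injective
    rw [← hτ, ← hτ, h2, h2, h1]
  have hroot : ∀ i, aeval (θ i) (∏ i, minpoly κ (θ i)) = 0 := fun i => by
    rw [map_prod]
    exact Finset.prod_eq_zero (Finset.mem_univ i) (minpoly.aeval _ _)
  refine ⟨∏ i, minpoly κ (θ i), θ, monic_prod_of_monic _ _ fun i _ => minpoly.monic (hint i), ?_,
    separable_prod hcop fun i => Algebra.IsSeparable.isSeparable κ (θ i), hroot, ?_⟩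
  · rw [natDegree_prod_of_monic _ _ fun i _ => minpoly.monic (hint i)]
    have : ∀ i, (minpoly κ (θ i)).natDegree = m := fun i => by
      rw [← IntermediateField.adjoin.finrank (hint i), hθ, IntermediateField.finrank_top', hL]
    simp [this]
  · intro z
    have h1 : ∀ i, ∃ q : κ[X], aeval (θ i) q = z i := fun i => by
      have : z i ∈ (IntermediateField.adjoin κ {θ i}).toSubalgebra := by rw [hθ]; trivial
      rw [IntermediateField.adjoin_simple_toSubalgebra_of_isAlgebraic (hint i).isAlgebraic,
        Algebra.adjoin_singleton_eq_range_aeval] at this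
      exact this
    choose q hq using h1
    obtain ⟨r, hr⟩ := Ideal.quotientInfToPiQuotient_surj (I := fun i => Ideal.span {minpoly κ (θ i)})
      (fun i j hij => (Ideal.isCoprime_span_singleton_iff _ _).2 (hcop hij)) (fun i => Ideal.Quotient.mk _ (q i))
    obtain ⟨r, rfl⟩ := Ideal.Quotient.mk_surjective r
    refine ⟨r, fun i => ?_⟩
    have h3 := congrFun hr i
    rw [Ideal.quotientInfToPiQuotient_mk'] at h3
    obtain ⟨s, hs⟩ := Ideal.mem_span_singleton.1 (Ideal.Quotient.eq.1 h3)
    rw [← hq i, ← sub_eq_zero, ← map_sub, hs, map_mul, minpoly.aeval, zero_mul]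
end

section
theorem aux_str1 {A F E B : Type} [CommRing A] [IsDomain A] [IsDiscreteValuationRing A] [Field F] [Field E]
    [CommRing B] [Algebra A F] [IsFractionRing A F] [Algebra F E] [FiniteDimensional F E] [IsGalois F E]
    [IsDedekindDomain B] [Algebra A B] [Module.Finite A B] [Algebra A E] [Algebra B E]
    [IsScalarTower A F E] [IsScalarTower A B E] [IsIntegralClosure B A E] :
    ∃ (ι : Type) (_ : Fintype ι) (I : ι → Ideal B) (e m : ℕ), e ≠ 0 ∧ (∀ i, (I i).IsMaximal) ∧
      (∀ i, (I i).LiesOver (IsLocalRing.maximalIdeal A)) ∧ Function.Injective I ∧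
      Fintype.card ι * (e * m) = Module.finrank F E ∧
      (∀ i, ∀ [(I i).LiesOver (IsLocalRing.maximalIdeal A)],
        Module.finrank (A ⧸ IsLocalRing.maximalIdeal A) (B ⧸ I i) = m) ∧
      (IsLocalRing.maximalIdeal A).map (algebraMap A B) = (∏ i, I i) ^ e := by
  have : IsFractionRing B E := IsIntegralClosure.isFractionRing_of_finite_extension A F E B
  let : MulSemiringAction Gal(E/F) B := IsIntegralClosure.MulSemiringAction A F E B
  have : Algebra.IsIntegral A B := inferInstance
  have : IsGaloisGroup Gal(E/F) A B := IsGaloisGroup.of_isFractionRing _ _ _ F E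
  have : FaithfulSMul A B := by
    rw [faithfulSMul_iff_algebraMap_injective]
    have : Function.Injective (algebraMap A E) := by
      rw [IsScalarTower.algebraMap_eq A F E]
      exact (algebraMap F E).injective.comp (IsFractionRing.injective A F)
    rw [IsScalarTower.algebraMap_eq A B E] at this
    exact Function.Injective.of_comp this
  have : Module.IsTorsionFree A B := inferInstance
  have : Module.Flat A B := inferInstance
  set 𝔭 := IsLocalRing.maximalIdeal A with h𝔭
  have h0 : 𝔭 ≠ 0 := IsDiscreteValuationRing.not_a_field A
  have : Fintype (𝔭.primesOver B) := (Algebra.QuasiFinite.finite_primesOver 𝔭).fintype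
  have hmax : ∀ i : 𝔭.primesOver B, i.1.IsMaximal := fun i =>
    Ideal.IsMaximal.of_liesOver_isMaximal i.1 𝔭
  refine ⟨𝔭.primesOver B, inferInstance, fun i => i.1, 𝔭.ramificationIdxIn B, 𝔭.inertiaDegIn B,
    Ideal.ramificationIdxIn_ne_zero Gal(E/F), hmax, fun i => inferInstance, Subtype.val_injective, ?_, ?_, ?_⟩
  · rw [Set.fintypeCard_eq_ncard, Ideal.ncard_primesOver_mul_ramificationIdxIn_mul_inertiaDegIn 𝔭 B Gal(E/F),
      IsGalois.card_aut_eq_finrank]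
  · intro i _
    have := hmax i
    rw [Ideal.inertiaDegIn_eq_inertiaDeg 𝔭 i.1 Gal(E/F), Ideal.inertiaDeg_eq_of_isMaximal 𝔭 i.1]
  · rw [Ideal.map_algebraMap_eq_finsetProd_pow h0, ← Finset.prod_pow, ← Finset.prod_set_coe]
    refine Finset.prod_congr (by ext; simp) fun i _ => ?_
    rw [Ideal.ramificationIdxIn_eq_ramificationIdx 𝔭 i.1 Gal(E/F)]
end

section
attribute [local instance] Ideal.Quotient.field in
theorem aux_str2 {A F E B : Type} [CommRing A] [IsDomain A] [IsDiscreteValuationRing A] [Field F] [Field E]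
    [CommRing B] [Algebra A F] [IsFractionRing A F] [Algebra F E] [FiniteDimensional F E] [IsGalois F E]
    [IsDedekindDomain B] [Algebra A B] [Module.Finite A B] [Algebra A E] [Algebra B E]
    [IsScalarTower A F E] [IsScalarTower A B E] [IsIntegralClosure B A E]
    (ϖ : A) (hϖ : Irreducible ϖ) (p : ℕ) (hp : p.Prime) (hchar : (p : A) ∈ IsLocalRing.maximalIdeal A)
    [hinf : Infinite (A ⧸ IsLocalRing.maximalIdeal A)]
    (hn : ¬ p ∣ Module.finrank F E) :
    ∃ (e : ℕ) (π v : B) (f1 a b c : A[X]) (y : B), 0 < e ∧ ¬ p ∣ e ∧ IsUnit v ∧ algebraMap A B ϖ = π ^ e * v ∧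
      f1.Monic ∧ e * f1.natDegree = Module.finrank F E ∧
      a * f1 + b * derivative f1 = 1 + C ϖ * c ∧ π ∣ aeval y f1 ∧ ∀ z : B, ∃ q : A[X], π ∣ z - aeval y q := by
  obtain ⟨ι, _, I, e, m, he, hI, hIl, hinj, hcard, hm, hmap⟩ := aux_str1 (A := A) (F := F) (E := E) (B := B)
  set 𝔭 := IsLocalRing.maximalIdeal A with h𝔭
  have hn0 : Module.finrank F E ≠ 0 := Module.finrank_pos.ne'
  have hc : CharP (A ⧸ 𝔭) p := by
    have : (p : A ⧸ 𝔭) = 0 := ?_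
    · exact (CharP.charP_iff_prime_eq_zero hp).2 this
    · rw [← map_natCast (Ideal.Quotient.mk 𝔭), Ideal.Quotient.eq_zero_iff_mem]
      exact hchar
  have hpm : ¬ p ∣ m := fun h => hn (hcard ▸ (h.mul_left _).mul_left _)
  have hpe : ¬ p ∣ e := fun h => hn (hcard ▸ (h.mul_right _).mul_left _)
  obtain ⟨f, θ, hf, hfd, hfs, hθ, hgen⟩ := aux_prim (κ := A ⧸ 𝔭) p hp m hpm (fun i => B ⧸ I i) (fun i => hm i)
  -- principal
  have hcop : Pairwise (Function.onFun IsCoprime I) := fun i j hij => by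
    exact Ideal.isCoprime_of_isMaximal (fun h => hij (hinj h))
  have hJ : ∏ i, I i = ⨅ i, I i := by
    rw [Ideal.prod_eq_iInf_of_pairwise_isCoprime (fun i _ j _ hij => hcop hij)]
    simp
  have hprin : IsPrincipalIdealRing B := by
    apply IsPrincipalIdealRing.of_finite_maximals
    refine (Set.finite_range I).subset fun N hN => ?_
    have hN : N.IsMaximal := hN
    have hNu : (N.under A).IsMaximal := Ideal.isMaximal_comap_of_isIntegral_of_isMaximal N
    have h1 : 𝔭.map (algebraMap A B) ≤ N := by
      rw [Ideal.map_le_iff_le_comap, h𝔭, ← IsLocalRing.eq_maximalIdeal hNu]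
    rw [hmap] at h1
    have h2 := hN.isPrime.le_of_pow_le h1
    obtain ⟨i, _, hi⟩ := (hN.isPrime.prod_le).1 h2
    exact ⟨i, (hI i).eq_of_le hN.ne_top hi⟩
  obtain ⟨π, hπ⟩ : ∃ π, ∏ i, I i = Ideal.span {π} := by
    obtain ⟨π, h⟩ := (IsPrincipalIdealRing.principal (∏ i, I i)).principal
    exact ⟨π, h⟩
  have hπm : ∀ z, (∀ i, z ∈ I i) → π ∣ z := fun z hz => by
    rw [← Ideal.mem_span_singleton, ← hπ, hJ, Ideal.mem_iInf]
    exact hz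
  have hass : Associated (π ^ e) (algebraMap A B ϖ) := by
    rw [← Ideal.span_singleton_eq_span_singleton, ← Ideal.span_singleton_pow, ← hπ, ← hmap,
      h𝔭, hϖ.maximalIdeal_eq, Ideal.map_span, Set.image_singleton]
  obtain ⟨v, hv⟩ := hass
  obtain ⟨y, hy⟩ : ∃ y : B, ∀ i, Ideal.Quotient.mk (I i) y = θ i := by
    obtain ⟨y, hy⟩ := Ideal.quotientInfToPiQuotient_surj hcop θ
    obtain ⟨y, rfl⟩ := Ideal.Quotient.mk_surjective y
    exact ⟨y, fun i => congrFun hy i⟩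
  have haev : ∀ (q : A[X]) (i), Ideal.Quotient.mk (I i) (aeval y q) = aeval (θ i) (q.map (Ideal.Quotient.mk 𝔭)) := by
    intro q i
    rw [← hy, aeval_def, hom_eval₂, aeval_def, eval₂_map]
    rfl
  have hsurj : Function.Surjective (Polynomial.map (Ideal.Quotient.mk 𝔭)) :=
    Polynomial.map_surjective _ Ideal.Quotient.mk_surjective
  obtain ⟨f1, hf1, hf1d, hf1m⟩ := Polynomial.lifts_and_natDegree_eq_and_monic (f := Ideal.Quotient.mk 𝔭)
    ((mem_lifts _).2 (hsurj f)) hf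
  obtain ⟨a', b', hab⟩ := hfs
  obtain ⟨a, rfl⟩ := hsurj a'
  obtain ⟨b, rfl⟩ := hsurj b'
  have hd : ∃ c, a * f1 + b * derivative f1 = 1 + C ϖ * c := by
    have : C ϖ ∣ (a * f1 + b * derivative f1 - 1) := by
      rw [C_dvd_iff_dvd_coeff]
      intro i
      rw [← Ideal.mem_span_singleton, ← hϖ.maximalIdeal_eq, ← Ideal.Quotient.eq_zero_iff_mem, ← h𝔭, ← coeff_map]
      simp only [Polynomial.map_sub, Polynomial.map_add, Polynomial.map_mul, ← derivative_map, hf1,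
        hab, Polynomial.map_one, sub_self, coeff_zero]
    obtain ⟨c, hc⟩ := this
    exact ⟨c, by linear_combination hc⟩
  obtain ⟨c, hc⟩ := hd
  refine ⟨e, π, v, f1, a, b, c, y, Nat.pos_of_ne_zero he, hpe, v.isUnit, hv.symm, hf1m, ?_, hc, ?_, ?_⟩
  · rw [hf1d, hfd, ← hcard]; ring
  · refine hπm _ fun i => ?_
    rw [← Ideal.Quotient.eq_zero_iff_mem, haev, hf1, hθ]
  · intro z
    obtain ⟨q, hq⟩ := hgen (fun i => Ideal.Quotient.mk (I i) z)
    obtain ⟨q, rfl⟩ := hsurj q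
    refine ⟨q, hπm _ fun i => ?_⟩
    rw [← Ideal.Quotient.eq_zero_iff_mem, map_sub, haev, hq, sub_self]
end

section
theorem aux_mid {P R A F E B : Type} [CommRing P] [Nontrivial P] [CommRing R] [IsDomain R] [IsNoetherianRing R]
    [CommRing A] [IsDomain A] [IsDiscreteValuationRing A] [Algebra P R] [Algebra R A]
    [Field F] [Algebra A F] [IsFractionRing A F] [Field E] [Algebra F E] [Algebra A E]
    [IsScalarTower A F E] [FiniteDimensional F E] [IsGalois F E] [Algebra R E] [IsScalarTower R A E]
    [CommRing B] [IsDedekindDomain B] [Algebra A B] [Module.Finite A B] [FaithfulSMul A B] [Algebra B E]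
    [IsScalarTower A B E] [IsIntegralClosure B A E]
    [Algebra R B] [Algebra P B] [IsScalarTower R A B] [IsScalarTower P R B]
    (x ϖ : R) [IsAdicComplete (Ideal.span {x}) R] (hϖ : Prime ϖ) (hx : ¬ ϖ ∣ x)
    (hϖA : Irreducible (algebraMap R A ϖ))
    (ϖ0 : P) (hϖ0 : algebraMap P R ϖ0 = ϖ)
    (hW1 : ∀ d : R, ¬ ϖ ∣ d → ∃ w : P, Associated d (algebraMap P R w))
    (hW2 : ∀ d : R, ¬ ϖ ∣ d → ∀ r, ∃ q : P, d ∣ r - algebraMap P R q)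
    (M : Submonoid R) (hM : ∀ d, d ∈ M ↔ ¬ ϖ ∣ d) [IsLocalization M A]
    (p : ℕ) (hp : p.Prime) (hpR : ϖ ∣ (p : R)) (hpe : ∀ e : ℕ, ¬ p ∣ e → IsUnit (e : R))
    [Infinite (A ⧸ IsLocalRing.maximalIdeal A)]
    (hn : ¬ p ∣ Module.finrank F E) :
    ∃ (g : P[X]) (β : E), g.Monic ∧ g.natDegree = Module.finrank F E ∧
      aeval β (g.map (algebraMap P R)) = 0 ∧ IntermediateField.adjoin F {β} = ⊤ := by
  have hpA : (p : A) ∈ IsLocalRing.maximalIdeal A := by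
    rw [hϖA.maximalIdeal_eq, Ideal.mem_span_singleton, ← map_natCast (algebraMap R A)]
    exact map_dvd _ hpR
  have hjac : algebraMap R A ϖ ∈ Ideal.jacobson (⊥ : Ideal A) := by
    rw [IsLocalRing.jacobson_eq_maximalIdeal _ bot_ne_top, hϖA.maximalIdeal_eq]
    exact Ideal.mem_span_singleton_self _
  obtain ⟨e, π, v, f1, a, b, c, y1, he0, hep, hv, hπ, hf1, hf1d, hab, hy1, hgen⟩ :=
    aux_str2 (A := A) (F := F) (E := E) (B := B) (algebraMap R A ϖ) hϖA p hp hpA hn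
  have heR := hpe e hep
  have heB : IsUnit (e : B) := by
    have := heR.map (algebraMap R B)
    rwa [map_natCast] at this
  obtain ⟨a0, ha0⟩ := aux_diff (A := A) (F := F) (E := E) (B := B) (algebraMap R A ϖ) hϖA
  have haev : ∀ q : A[X], Ideal.Quotient.mk (Ideal.span {π}) (aeval y1 q) =
      aeval (Ideal.Quotient.mk (Ideal.span {π}) y1) q := fun q =>
    (aeval_algHom_apply (Ideal.Quotient.mkₐ A (Ideal.span {π})) y1 q).symm
  have hmk : ∀ z : B, π ∣ z ↔ Ideal.Quotient.mk (Ideal.span {π}) z = 0 := fun z => by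
    rw [Ideal.Quotient.eq_zero_iff_mem, Ideal.mem_span_singleton]
  obtain ⟨f0, u0, y, c', hf0, hf0d, hy, hder, hgen', hu0, hc, hcv⟩ :=
    aux_residue (P := P) (R := R) (A := A) (Q := B ⧸ Ideal.span {π}) x ϖ hϖ hx hW1 hW2 M hM hjac
      f1 a b c hf1 hab (Ideal.Quotient.mk _ y1) (by rw [← haev, ← hmk]; exact hy1)
      (by
        intro z
        obtain ⟨z, rfl⟩ := Ideal.Quotient.mk_surjective z
        obtain ⟨q, hq⟩ := hgen z
        refine ⟨q, ?_⟩
        rw [hmk, map_sub, sub_eq_zero] at hq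
        rw [hq, haev]) e he0 heR (hv.map (Ideal.Quotient.mk (Ideal.span {π}))).unit
  have hπ0 : algebraMap P B ϖ0 = π ^ e * v := by
    rw [IsScalarTower.algebraMap_apply P R B, hϖ0, IsScalarTower.algebraMap_apply R A B, hπ]
  obtain ⟨α, ρ, hα, hαf, hρ, hN⟩ := aux_hensel π f0 u0 ϖ0 v e he0 heB hπ0 y c' hy hder hc
    (by simpa using hcv) (e * (2 * a0))
  have hS : Algebra.adjoin A {α} = ⊤ := by
    refine aux_gen π (algebraMap R A ϖ) hjac e ?_ _ ρ ?_ (hρ ▸ hc) ?_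
    · rw [hπ]
      exact (hv.mul_right_dvd).2 dvd_rfl
    · rw [← hαf]
      have : aeval α f0 = aeval α (f0.map ((algebraMap R A).comp (algebraMap P R))) := by
        rw [aeval_def, aeval_def, eval₂_map, ← RingHom.comp_assoc, ← IsScalarTower.algebraMap_eq,
          ← IsScalarTower.algebraMap_eq]
      rw [this]
      exact aeval_mem_adjoin_singleton A α
    · intro z
      obtain ⟨q, hq⟩ := hgen' (Ideal.Quotient.mk _ z)
      refine ⟨aeval α q, aeval_mem_adjoin_singleton A α, ?_⟩
      rw [hmk, map_sub, ← hq, ← hα]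
      exact sub_eq_zero.2 (aeval_algHom_apply (Ideal.Quotient.mkₐ A (Ideal.span {π})) α q)
  obtain ⟨a, b, hab⟩ := ha0 α hS
  have hdl : (C ϖ0 * u0).degree < (f0 ^ e).degree := by
    have h1 : (C ϖ0 * u0).degree ≤ u0.degree := by
      refine (degree_mul_le _ _).trans ?_
      refine (add_le_add_left degree_C_le _).trans ?_
      rw [zero_add]
    have h2 : (f0 ^ e).degree = ((e * f0.natDegree : ℕ) : WithBot ℕ) := by
      rw [degree_eq_natDegree (hf0.pow e).ne_zero, hf0.natDegree_pow]
    rw [h2]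
    refine h1.trans_lt (hu0.trans_le ?_)
    exact_mod_cast Nat.le_mul_of_pos_left _ he0
  refine aux_final (A := A) (B := B) x ϖ hϖ hx ϖ0 hϖ0 hW1 hW2 M hM α hS a0 a b hab (f0 ^ e - C ϖ0 * u0)
    ((hf0.pow e).sub_of_left hdl) ?_ ?_
  · rw [natDegree_eq_of_degree_eq (degree_sub_eq_left_of_degree_lt hdl), hf0.natDegree_pow, hf0d, hf1d]
  · have : aeval α ((f0 ^ e - C ϖ0 * u0).map ((algebraMap R A).comp (algebraMap P R))) = aeval α (f0 ^ e - C ϖ0 * u0) := by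
      rw [aeval_def, aeval_def, eval₂_map, ← RingHom.comp_assoc, ← IsScalarTower.algebraMap_eq,
        ← IsScalarTower.algebraMap_eq]
    rw [this]
    refine dvd_trans ?_ hN
    rw [map_pow, hπ, mul_pow, ← pow_mul]
    exact ((hv.pow _).mul_right_dvd).2 dvd_rfl
end

section
theorem aux_ps_dvd {T : Type} [CommRing T] [IsDomain T] [IsDiscreteValuationRing T] (t : T) (ht : Irreducible t)
    (g : PowerSeries T) : PowerSeries.C t ∣ g ↔ g.map (IsLocalRing.residue T) = 0 := by
  have hmem : ∀ r : T, IsLocalRing.residue T r = 0 ↔ t ∣ r := fun r => by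
    rw [IsLocalRing.residue_eq_zero_iff, ht.maximalIdeal_eq, Ideal.mem_span_singleton]
  constructor
  · rintro ⟨h, rfl⟩
    rw [map_mul, PowerSeries.map_C, (hmem t).2 dvd_rfl, map_zero, zero_mul]
  · intro h
    have : ∀ n, ∃ r, PowerSeries.coeff n g = t * r := fun n => by
      have := congrArg (PowerSeries.coeff n) h
      rw [PowerSeries.coeff_map, map_zero, hmem] at this
      exact this
    choose r hr using this
    refine ⟨PowerSeries.mk r, ?_⟩
    ext n
    rw [PowerSeries.coeff_C_mul, PowerSeries.coeff_mk, hr]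

theorem aux_ps_prime {T : Type} [CommRing T] [IsDomain T] [IsDiscreteValuationRing T] (t : T) (ht : Irreducible t) :
    Prime (PowerSeries.C t) := by
  refine ⟨?_, ?_, ?_⟩
  · rw [Ne, map_eq_zero_iff _ PowerSeries.C_injective]
    exact ht.ne_zero
  · intro h
    have := (aux_ps_dvd t ht 1).1 h.dvd
    simp at this
  · intro a b
    simp only [aux_ps_dvd t ht, map_mul, mul_eq_zero, imp_self]

theorem aux_ps_X {T : Type} [CommRing T] [IsDomain T] [IsDiscreteValuationRing T] (t : T) (ht : Irreducible t) :
    ¬ PowerSeries.C t ∣ (PowerSeries.X : PowerSeries T) := by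
  rw [aux_ps_dvd t ht, PowerSeries.map_X]
  exact PowerSeries.X_ne_zero

theorem aux_ps_alg {T : Type} [CommRing T] (q : T[X]) : algebraMap T[X] (PowerSeries T) q = (q : PowerSeries T) := by
  rw [PowerSeries.algebraMap_apply', Algebra.algebraMap_self, PowerSeries.map_id]
  rfl

theorem aux_ps_W1 {T : Type} [CommRing T] [IsDomain T] [IsDiscreteValuationRing T]
    [IsAdicComplete (IsLocalRing.maximalIdeal T) T] (t : T) (ht : Irreducible t) (d : PowerSeries T)
    (hd : ¬ PowerSeries.C t ∣ d) : ∃ w : T[X], Associated d (algebraMap T[X] (PowerSeries T) w) := by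
  rw [aux_ps_dvd t ht] at hd
  obtain ⟨f, h, H⟩ := PowerSeries.exists_isWeierstrassFactorization hd
  refine ⟨f, Associated.symm ⟨H.isUnit.unit, ?_⟩⟩
  rw [aux_ps_alg, IsUnit.unit_spec, ← H.eq_mul]

theorem aux_ps_W2 {T : Type} [CommRing T] [IsDomain T] [IsDiscreteValuationRing T]
    [IsAdicComplete (IsLocalRing.maximalIdeal T) T] (t : T) (ht : Irreducible t) (d : PowerSeries T)
    (hd : ¬ PowerSeries.C t ∣ d) (r : PowerSeries T) : ∃ q : T[X], d ∣ r - algebraMap T[X] (PowerSeries T) q := by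
  rw [aux_ps_dvd t ht] at hd
  obtain ⟨f, h, H⟩ := PowerSeries.exists_isWeierstrassDivision (f := r) hd
  refine ⟨h, f, ?_⟩
  rw [aux_ps_alg, H.eq_mul_add, add_sub_cancel_right]

theorem aux_loc_dvr {R A : Type} [CommRing R] [IsDomain R] [IsNoetherianRing R] [CommRing A] [IsDomain A] [Algebra R A]
    (ϖ : R) (hϖ : Prime ϖ) [hP : (Ideal.span {ϖ}).IsPrime] [IsLocalization.AtPrime A (Ideal.span {ϖ})] :
    IsDiscreteValuationRing A ∧ Irreducible (algebraMap R A ϖ) := by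
  have : IsLocalRing A := IsLocalization.AtPrime.isLocalRing A (Ideal.span {ϖ})
  have : IsNoetherianRing A := IsLocalization.isNoetherianRing (Ideal.span {ϖ}).primeCompl A inferInstance
  have hmax : IsLocalRing.maximalIdeal A = Ideal.span {algebraMap R A ϖ} := by
    rw [← IsLocalization.AtPrime.map_eq_maximalIdeal (Ideal.span {ϖ}) A, Ideal.map_span, Set.image_singleton]
  have hne : algebraMap R A ϖ ≠ 0 := by
    rw [Ne, map_eq_zero_iff _ (IsLocalization.injective A (Ideal.primeCompl_le_nonZeroDivisors (Ideal.span {ϖ})))]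
    exact hϖ.ne_zero
  have hnf : ¬ IsField A := fun h => by
    rw [IsLocalRing.isField_iff_maximalIdeal_eq, hmax, Ideal.span_singleton_eq_bot] at h
    exact hne h
  have : IsDiscreteValuationRing A := by
    refine ((IsDiscreteValuationRing.TFAE A hnf).out 0 4).2 ?_
    rw [hmax]
    exact ⟨_, rfl⟩
  exact ⟨this, IsDiscreteValuationRing.irreducible_of_span_eq_maximalIdeal _ hne hmax⟩

theorem aux_inf {R A : Type} [CommRing R] [IsDomain R] [IsNoetherianRing R] [CommRing A] [IsDomain A] [Algebra R A]
    [IsLocalRing A]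
    (ϖ x : R) (hϖ : Prime ϖ) (hx : ¬ ϖ ∣ x) [hP : (Ideal.span {ϖ}).IsPrime] [IsLocalization.AtPrime A (Ideal.span {ϖ})]
    (hxu : x ∈ Ideal.jacobson (⊥ : Ideal R)) :
    Infinite (A ⧸ IsLocalRing.maximalIdeal A) := by
  have key : ∀ n k : ℕ, Ideal.Quotient.mk (IsLocalRing.maximalIdeal A) (algebraMap R A (x ^ n)) ≠
      Ideal.Quotient.mk (IsLocalRing.maximalIdeal A) (algebraMap R A (x ^ (n + (k + 1)))) := by
    intro n k h
    rw [Ideal.Quotient.eq, ← map_sub, ← Ideal.mem_under, IsLocalization.AtPrime.under_maximalIdeal A (Ideal.span {ϖ}),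
      Ideal.mem_span_singleton] at h
    have h2 : x ^ n - x ^ (n + (k + 1)) = x ^ n * (x * (- x ^ k) + 1) := by ring
    rw [h2] at h
    rcases hϖ.dvd_or_dvd h with h | h
    · exact hx (hϖ.dvd_of_dvd_pow h)
    · exact hϖ.not_isUnit (isUnit_of_dvd_unit h (Ideal.mem_jacobson_bot.1 hxu _))
  refine Infinite.of_injective
    (fun n : ℕ => Ideal.Quotient.mk (IsLocalRing.maximalIdeal A) (algebraMap R A (x ^ n))) fun n m h => ?_
  rcases lt_trichotomy n m with hlt | rfl | hlt
  · obtain ⟨k, rfl⟩ := Nat.exists_eq_add_of_lt hlt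
    exact absurd h (key n k)
  · rfl
  · obtain ⟨k, rfl⟩ := Nat.exists_eq_add_of_lt hlt
    exact absurd h.symm (key m k)

theorem aux_ps_char {T : Type} [CommRing T] [IsDomain T] [IsDiscreteValuationRing T] (t : T) (ht : Irreducible t)
    (p : ℕ) (hp : p.Prime) [CharP (IsLocalRing.ResidueField T) p] :
    PowerSeries.C t ∣ (p : PowerSeries T) ∧ ∀ e : ℕ, ¬ p ∣ e → IsUnit (e : PowerSeries T) := by
  constructor
  · rw [aux_ps_dvd t ht, map_natCast, ← map_natCast (PowerSeries.C), CharP.cast_eq_zero, map_zero]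
  · intro e he
    rw [PowerSeries.isUnit_iff_constantCoeff, map_natCast, ← IsLocalRing.residue_ne_zero_iff_isUnit, map_natCast, Ne,
      CharP.cast_eq_zero_iff _ p]
    exact he
end

section
theorem aux_ps_main (p : ℕ) (hp : p.Prime)
    (T : Type) [CommRing T] [IsDomain T] [IsDiscreteValuationRing T]
    [IsAdicComplete (IsLocalRing.maximalIdeal T) T]
    [CharP (IsLocalRing.ResidueField T) p]
    (E : Type) [Field E] [Algebra (FractionRing (PowerSeries T)) E]
    [FiniteDimensional (FractionRing (PowerSeries T)) E]
    [IsGalois (FractionRing (PowerSeries T)) E]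
    (hdeg : ¬ p ∣ Module.finrank (FractionRing (PowerSeries T)) E) :
    ∃ (g : T[X][X]) (β : E), g.Monic ∧ g.natDegree = Module.finrank (FractionRing (PowerSeries T)) E ∧
      eval₂ ((algebraMap (FractionRing (PowerSeries T)) E).comp
        ((algebraMap (PowerSeries T) (FractionRing (PowerSeries T))).comp Polynomial.coeToPowerSeries.ringHom)) β g = 0 ∧
      IntermediateField.adjoin (FractionRing (PowerSeries T)) {β} = ⊤ := by
  obtain ⟨t, ht⟩ := IsDiscreteValuationRing.exists_irreducible T
  have hϖ := aux_ps_prime t ht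
  set ϖ : PowerSeries T := PowerSeries.C t with hϖdef
  have hP : (Ideal.span {ϖ}).IsPrime := (Ideal.span_singleton_prime hϖ.ne_zero).2 hϖ
  let A := Localization.AtPrime (Ideal.span {ϖ})
  have hle : (Ideal.span {ϖ}).primeCompl ≤ nonZeroDivisors (PowerSeries T) := Ideal.primeCompl_le_nonZeroDivisors _
  have : IsDomain A := IsLocalization.isDomain_localization hle
  obtain ⟨hdvr, hirr⟩ := aux_loc_dvr (A := A) ϖ hϖ
  let F := FractionRing (PowerSeries T)
  let : Algebra A F := IsLocalization.localizationAlgebraOfSubmonoidLe A F _ _ hle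
  have : IsScalarTower (PowerSeries T) A F := IsLocalization.localization_isScalarTower_of_submonoid_le A F _ _ hle
  have : IsFractionRing A F := IsFractionRing.isFractionRing_of_isDomain_of_isLocalization (Ideal.span {ϖ}).primeCompl A F
  let : Algebra (PowerSeries T) E := ((algebraMap F E).comp (algebraMap (PowerSeries T) F)).toAlgebra
  have : IsScalarTower (PowerSeries T) F E := IsScalarTower.of_algebraMap_eq' rfl
  let : Algebra A E := ((algebraMap F E).comp (algebraMap A F)).toAlgebra
  have : IsScalarTower A F E := IsScalarTower.of_algebraMap_eq' rfl
  have : IsScalarTower (PowerSeries T) A E := IsScalarTower.of_algebraMap_eq fun r => by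
    change algebraMap F E (algebraMap (PowerSeries T) F r) = algebraMap F E (algebraMap A F (algebraMap _ A r))
    rw [← IsScalarTower.algebraMap_apply (PowerSeries T) A F]
  let B := integralClosure A E
  have : Module.Finite A B := IsIntegralClosure.finite A F E B
  have : IsDedekindDomain B := IsIntegralClosure.isDedekindDomain A F E B
  have : FaithfulSMul A B := by
    rw [faithfulSMul_iff_algebraMap_injective]
    have : Function.Injective (algebraMap A E) := by
      rw [IsScalarTower.algebraMap_eq A F E]
      exact (algebraMap F E).injective.comp (IsFractionRing.injective A F)
    rw [IsScalarTower.algebraMap_eq A B E, RingHom.coe_comp] at this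
    exact Function.Injective.of_comp this
  let : Algebra (PowerSeries T) B := ((algebraMap A B).comp (algebraMap (PowerSeries T) A)).toAlgebra
  have : IsScalarTower (PowerSeries T) A B := IsScalarTower.of_algebraMap_eq' rfl
  let : Algebra T[X] B := ((algebraMap (PowerSeries T) B).comp (algebraMap T[X] (PowerSeries T))).toAlgebra
  have : IsScalarTower T[X] (PowerSeries T) B := IsScalarTower.of_algebraMap_eq' rfl
  have hX := aux_ps_X t ht
  have hXj : (PowerSeries.X : PowerSeries T) ∈ Ideal.jacobson (⊥ : Ideal (PowerSeries T)) := by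
    rw [Ideal.mem_jacobson_bot]
    intro y
    rw [PowerSeries.isUnit_iff_constantCoeff]
    simp
  have hinf : Infinite (A ⧸ IsLocalRing.maximalIdeal A) := aux_inf (R := PowerSeries T) (A := A) ϖ PowerSeries.X hϖ hX hXj
  obtain ⟨hpR, hpe⟩ := aux_ps_char t ht p hp
  obtain ⟨g, β, hg, hgd, hgβ, hβ⟩ := aux_mid (P := T[X]) (R := PowerSeries T) (A := A) (F := F) (E := E) (B := B)
    PowerSeries.X ϖ hϖ hX hirr (C t) (by rw [aux_ps_alg, Polynomial.coe_C]) (aux_ps_W1 t ht) (aux_ps_W2 t ht)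
    (Ideal.span {ϖ}).primeCompl (fun d => by rw [Ideal.mem_primeCompl_iff, Ideal.mem_span_singleton]) p hp hpR hpe hdeg
  refine ⟨g, β, hg, hgd, ?_, hβ⟩
  rw [aeval_def, eval₂_map] at hgβ
  have hco : Polynomial.coeToPowerSeries.ringHom = algebraMap T[X] (PowerSeries T) :=
    RingHom.ext fun q => by rw [aux_ps_alg, Polynomial.coeToPowerSeries.ringHom_apply]
  rw [hco, ← RingHom.comp_assoc]
  exact hgβ
end

section
attribute [local instance] Algebra.TensorProduct.rightAlgebra in
theorem aux_desc {k F E : Type} [Field k] [Field F] [Field E] [Algebra k F] [Algebra F E] [FiniteDimensional F E]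
    [Algebra.IsSeparable F E] (h : k[X]) (hh : h.Monic) (hd : h.natDegree = Module.finrank F E) (β : E)
    (hβ : eval₂ ((algebraMap F E).comp (algebraMap k F)) β h = 0) (htop : IntermediateField.adjoin F {β} = ⊤) :
    ∃ (L : Type) (_ : Field L) (_ : Algebra k L), FiniteDimensional k L ∧ Algebra.IsSeparable k L ∧
      Nonempty ((L ⊗[k] F) ≃ₐ[F] E) := by
  have hint : IsIntegral F β := IsIntegral.of_finite F β
  have hroot : aeval β (h.map (algebraMap k F)) = 0 := by
    rw [aeval_def, eval₂_map]; exact hβ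
  have hmd : (minpoly F β).natDegree = Module.finrank F E := by
    rw [← IntermediateField.adjoin.finrank hint, htop, IntermediateField.finrank_top']
  have hmin : h.map (algebraMap k F) = minpoly F β := by
    refine eq_of_monic_of_dvd_of_natDegree_le (minpoly.monic hint) (hh.map _) (minpoly.dvd F β hroot) ?_
    rw [hh.natDegree_map, hmd, hd]
  have hirr : Irreducible h := by
    refine Polynomial.Monic.irreducible_of_irreducible_map (algebraMap k F) h hh ?_
    rw [hmin]; exact minpoly.irreducible hint
  have hsep : h.Separable := by
    rw [← Polynomial.separable_map (algebraMap k F), hmin]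
    exact Algebra.IsSeparable.isSeparable F β
  have : Fact (Irreducible h) := ⟨hirr⟩
  have hfin : FiniteDimensional k (AdjoinRoot h) := (AdjoinRoot.powerBasis hh.ne_zero).finite
  have hrank : Module.finrank k (AdjoinRoot h) = Module.finrank F E := by
    rw [(AdjoinRoot.powerBasis hh.ne_zero).finrank, AdjoinRoot.powerBasis_dim, hd]
  have hs : Algebra.IsSeparable k (AdjoinRoot h) := by
    have h1 : IntermediateField.adjoin k {AdjoinRoot.root h} = ⊤ := by
      rw [eq_top_iff]
      intro z _
      refine IntermediateField.algebra_adjoin_le_adjoin k _ ?_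
      rw [AdjoinRoot.adjoinRoot_eq_top]
      trivial
    have h2 : Algebra.IsSeparable k (IntermediateField.adjoin k {AdjoinRoot.root h}) := by
      rw [IntermediateField.isSeparable_adjoin_simple_iff_isSeparable, IsSeparable,
        AdjoinRoot.minpoly_root hh.ne_zero, hh.leadingCoeff, inv_one, C_1, mul_one]
      exact hsep
    rw [h1] at h2
    exact AlgEquiv.Algebra.isSeparable IntermediateField.topEquiv
  refine ⟨AdjoinRoot h, inferInstance, inferInstance, hfin, hs, ?_⟩
  let : Algebra k E := ((algebraMap F E).comp (algebraMap k F)).toAlgebra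
  have : IsScalarTower k F E := IsScalarTower.of_algebraMap_eq' rfl
  let φ : AdjoinRoot h →ₐ[k] E := AdjoinRoot.liftAlgHom h (Algebra.ofId k E) β hβ
  let Φ : F ⊗[k] AdjoinRoot h →ₐ[F] E := Algebra.TensorProduct.lift (Algebra.ofId F E) φ (fun _ _ => Commute.all _ _)
  have hsurj : Function.Surjective Φ := by
    rw [← AlgHom.range_eq_top, eq_top_iff]
    have : Algebra.adjoin F {β} = ⊤ := by
      rw [← IntermediateField.adjoin_simple_toSubalgebra_of_isAlgebraic hint.isAlgebraic, htop]
      rfl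
    rw [← this, Algebra.adjoin_le_iff, Set.singleton_subset_iff]
    refine ⟨1 ⊗ₜ AdjoinRoot.root h, ?_⟩
    change Φ (1 ⊗ₜ AdjoinRoot.root h) = β
    simp only [Φ, Algebra.TensorProduct.lift_tmul, map_one, one_mul]
    exact AdjoinRoot.lift_root hβ
  have hinj : Function.Injective Φ := by
    have : Module.finrank F (F ⊗[k] AdjoinRoot h) = Module.finrank F E := by
      rw [Module.finrank_baseChange, hrank]
    exact (LinearMap.injective_iff_surjective_of_finrank_eq_finrank (f := Φ.toLinearMap) this).2 hsurj
  let e2 : F ⊗[k] AdjoinRoot h ≃ₐ[F] E := AlgEquiv.ofBijective Φ ⟨hinj, hsurj⟩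
  let e1 : AdjoinRoot h ⊗[k] F ≃ₐ[F] F ⊗[k] AdjoinRoot h :=
    AlgEquiv.ofRingEquiv (f := (Algebra.TensorProduct.comm k (AdjoinRoot h) F).toRingEquiv) fun r => rfl
  exact ⟨e1.trans e2⟩
end

end auxiliary

open scoped TensorProduct

attribute [local instance] Algebra.TensorProduct.rightAlgebra

/-- Tame descent in residue characteristic `p`: if `T` is a complete discrete valuation
ring with residue field of characteristic `p > 0` and fraction field `K`, then every
finite Galois field extension of `Frac(T⟦x⟧)` of degree prime to `p` is induced by a
finite separable field extension of the rational function field `K(x)`, where `K(x)`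
embeds in `Frac(T⟦x⟧)` via `T[x] ⊆ T⟦x⟧`. -/
theorem point_to_global_tame_char_p
    (p : ℕ) (hp : p.Prime)
    (T : Type) [CommRing T] [IsDomain T] [IsDiscreteValuationRing T]
    [IsAdicComplete (IsLocalRing.maximalIdeal T) T]
    [CharP (IsLocalRing.ResidueField T) p]
    (ψ : RatFunc (FractionRing T) →+* FractionRing (PowerSeries T))
    (hψ : ∀ q : Polynomial T,
      ψ (algebraMap (Polynomial (FractionRing T)) (RatFunc (FractionRing T))
          (q.map (algebraMap T (FractionRing T)))) =
        algebraMap (PowerSeries T) (FractionRing (PowerSeries T))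
          (Polynomial.coeToPowerSeries.ringHom q))
    (E_P : Type) [Field E_P] [Algebra (FractionRing (PowerSeries T)) E_P]
    [FiniteDimensional (FractionRing (PowerSeries T)) E_P]
    [IsGalois (FractionRing (PowerSeries T)) E_P]
    (hdeg : ¬ p ∣ Module.finrank (FractionRing (PowerSeries T)) E_P) :
    letI : Algebra (RatFunc (FractionRing T)) (FractionRing (PowerSeries T)) :=
      ψ.toAlgebra
    ∃ (E : Type) (_ : Field E) (_ : Algebra (RatFunc (FractionRing T)) E),
      FiniteDimensional (RatFunc (FractionRing T)) E ∧
      Algebra.IsSeparable (RatFunc (FractionRing T)) E ∧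
      Nonempty ((E ⊗[RatFunc (FractionRing T)] FractionRing (PowerSeries T))
        ≃ₐ[FractionRing (PowerSeries T)] E_P) := by
  letI : Algebra (RatFunc (FractionRing T)) (FractionRing (PowerSeries T)) := ψ.toAlgebra
  obtain ⟨g, β, hg, hgd, hgβ, hβ⟩ := aux_ps_main p hp T E_P hdeg
  let χ : Polynomial T →+* RatFunc (FractionRing T) :=
    (algebraMap (Polynomial (FractionRing T)) (RatFunc (FractionRing T))).comp
      (Polynomial.mapRingHom (algebraMap T (FractionRing T)))
  have hχ : (algebraMap (RatFunc (FractionRing T)) (FractionRing (PowerSeries T))).comp χ =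
      (algebraMap (PowerSeries T) (FractionRing (PowerSeries T))).comp
        Polynomial.coeToPowerSeries.ringHom := RingHom.ext fun q => hψ q
  refine aux_desc (g.map χ) (hg.map χ) ?_ β ?_ hβ
  · rw [hg.natDegree_map, hgd]
  · rw [Polynomial.eval₂_map, RingHom.comp_assoc, hχ]
    exact hgβ
end

section
/- Let k be a field of characteristic p > 0. Then every finite Galois field extension E of k((x))((t)) whose degree is not divisible by p is induced by a finite separable field extension of k((t))(x): there exists a finite separable field extension E' of the rational function field k((t))(x) such that E' ⊗_{k((t))(x)} k((x))((t)) is isomorphic to E as a k((x))((t))-algebra. -/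
open scoped TensorProduct

attribute [local instance] Algebra.TensorProduct.rightAlgebra

/-- The ring homomorphism `k₁((t)) →+* k₂((t))` applying a ring homomorphism
`f : k₁ →+* k₂` to each coefficient of a Laurent series. -/
noncomputable def lsMap {R S : Type*} [CommRing R] [CommRing S]
    (f : R →+* S) : LaurentSeries R →+* LaurentSeries S where
  toFun x := x.map f
  map_one' := by ext g; by_cases h : g = 0 <;> simp [h]
  map_mul' x y := HahnSeries.map_mul f.toNonUnitalRingHom
  map_zero' := by ext g; simp
  map_add' x y := HahnSeries.map_add f.toAddMonoidHom

/-- A type synonym for the Laurent series field `k((x))`, so that `k((x))((t))` is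
`LaurentSeries (Kx k)`. -/
def Kx (k : Type) [Field k] : Type := LaurentSeries k

noncomputable instance (k : Type) [Field k] : Field (Kx k) :=
  inferInstanceAs (Field (LaurentSeries k))

section
open Polynomial


theorem isAdicComplete_of_finite' {R M : Type} [CommRing R] [IsNoetherianRing R] (I : Ideal R)
    [IsAdicComplete I R] [AddCommGroup M] [Module R M] [Module.Finite R M] :
    IsAdicComplete I M := by
  rw [← AdicCompletion.of_bijective_iff]
  have h := AdicCompletion.ofTensorProduct_bijective_of_finite_of_isNoetherian I M
  let e1 := (TensorProduct.lid R M).symm ≪≫ₗ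
    (TensorProduct.congr (AdicCompletion.ofLinearEquiv I R) (LinearEquiv.refl R M))
  have : (AdicCompletion.of I M : M → AdicCompletion I M) =
      AdicCompletion.ofTensorProduct I M ∘ e1 := by
    ext x n
    simp [e1, AdicCompletion.ofTensorProduct_tmul]

    exact (one_smul _ _).symm
  rw [this]
  exact h.comp e1.bijective

theorem isLocalRing_of_finite' {R B : Type} [CommRing R] [IsNoetherianRing R] [IsLocalRing R]
    [IsAdicComplete (IsLocalRing.maximalIdeal R) R] [CommRing B] [IsDomain B] [Algebra R B]
    [Module.Finite R B] : IsLocalRing B ∧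
    HenselianRing B ((IsLocalRing.maximalIdeal R).map (algebraMap R B)) := by
  set m := IsLocalRing.maximalIdeal R
  set J := m.map (algebraMap R B) with hJ
  have h1 : IsAdicComplete m B := isAdicComplete_of_finite' m
  have h2 : IsAdicComplete J B := by
    rw [hJ, IsAdicComplete.map_algebraMap_iff]; exact h1
  have hH : HenselianRing B J := inferInstance
  have hloc := isLocalHom_of_le_jacobson_bot J hH.jac
  refine ⟨IsLocalRing.of_isUnit_or_isUnit_one_sub_self fun a => ?_, hH⟩
  let _ : Field (R ⧸ m) := Ideal.Quotient.field m
  have : Module.Finite (R ⧸ m) (B ⧸ J) := inferInstance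
  have : IsArtinianRing (B ⧸ J) := IsArtinianRing.of_finite (R ⧸ m) (B ⧸ J)
  let q := Ideal.Quotient.mk J
  obtain ⟨n, y, hy⟩ := IsArtinian.exists_pow_succ_smul_dvd (q a) (1 : B ⧸ J)
  simp only [smul_eq_mul, mul_one, Nat.succ_eq_add_one] at hy
  have hy2 : ∀ k : ℕ, (q a)^n = (q a)^(n+k) * y^k := by
    intro k
    induction k with
    | zero => simp
    | succ k ih => rw [ih]; calc _ = (q a)^n * ((q a)^k * y^k) := by ring
                              _ = _ := by rw [← hy]; ring
  obtain ⟨y', rfl⟩ := Ideal.Quotient.mk_surjective y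
  have hid : q (a^n * y'^n) * q (a^n * y'^n) = q (a^n*y'^n) := by
    simp only [map_mul, map_pow]
    conv_rhs => rw [hy2 n]
    ring
  obtain ⟨b, hb, hb2⟩ := hH.is_henselian (X^2 - X) (by monicity!) (a^n*y'^n) (by
      rw [← Ideal.Quotient.eq_zero_iff_mem]
      simp only [eval_sub, eval_pow, eval_X]
      change q _ = 0
      rw [map_sub, pow_two, map_mul, hid, sub_self]) (by
      refine IsUnit.of_mul_eq_one (q (2 * (a^n*y'^n) - 1)) ?_
      have : derivative (X^2 - X : B[X]) = 2 * X - 1 := by simp [pow_two, two_mul]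
      rw [this]
      simp only [eval_sub, eval_mul, eval_X, eval_one, eval_ofNat]
      change q _ * q _ = 1
      simp only [map_sub, map_mul (f := q) (2:B), map_one, map_ofNat]
      linear_combination 4 * hid)
  rw [← Ideal.Quotient.eq_zero_iff_mem, map_sub, sub_eq_zero] at hb2
  have hb3 : b * (b - 1) = 0 := by
    have : b^2 - b = 0 := by simpa using hb
    linear_combination this
  change q b = q _ at hb2
  rcases mul_eq_zero.mp hb3 with h | h
  · right
    have : q a ^ n = 0 := by
      have h5 : q (a^n*y'^n) = 0 := by rw [← hb2, h, map_zero]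
      have := hy2 n
      rw [this]
      simp only [map_mul, map_pow] at h5
      calc _ = q a ^ n * (q a ^ n * q y' ^n) := by ring
        _ = 0 := by rw [h5, mul_zero]
    apply IsUnit.of_map q
    rw [map_sub, map_one]
    exact IsNilpotent.isUnit_one_sub ⟨n, this⟩
  · left
    have h5 : q (a^n*y'^n) = 1 := by rw [← hb2, sub_eq_zero.mp h, map_one]
    apply IsUnit.of_map q
    by_cases hn : n = 0
    · subst hn
      refine IsUnit.of_mul_eq_one (q y') ?_
      simpa using hy
    · have : IsUnit (q a ^ n) := by
        refine IsUnit.of_mul_eq_one (q y' ^ n) ?_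
        simpa using h5
      exact (isUnit_pow_iff hn).mp this

theorem henselian_dvr' {B : Type} [CommRing B] [IsDomain B] [IsDiscreteValuationRing B]
    (J : Ideal B) (hJ : J ≠ ⊥) [hH : HenselianRing B J] : HenselianLocalRing B where
  is_henselian := by
    intro f hf a₀ h0 h1
    set m := IsLocalRing.maximalIdeal B
    have hu : ∀ a, a - a₀ ∈ m → IsUnit (f.derivative.eval a) := by
      intro a ha
      by_contra hc
      have h2 : f.derivative.eval a ∈ m := hc
      have h3 : f.derivative.eval a - f.derivative.eval a₀ ∈ m :=
        Ideal.mem_of_dvd _ (Polynomial.sub_dvd_eval_sub a a₀ f.derivative) ha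
      have h4 := m.sub_mem h2 h3
      rw [sub_sub_cancel] at h4
      exact h4 h1
    have key : ∀ N : ℕ, ∃ a, a - a₀ ∈ m ∧ f.eval a ∈ m ^ (N+1) := by
      intro N
      induction N with
      | zero => exact ⟨a₀, by simp, by simpa using h0⟩
      | succ N ih =>
        obtain ⟨a, ha, hfa⟩ := ih
        obtain ⟨u, hu⟩ := hu a ha
        set y := - (f.eval a * ((u⁻¹ : Bˣ) : B)) with hy
        have hym : y ∈ m ^ (N+1) := by
          rw [hy]; exact neg_mem (Ideal.mul_mem_right _ _ hfa)
        obtain ⟨c, hc⟩ := exists_mul_sq_add_linear_part_eq_eval_add f a y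
        refine ⟨a + y, ?_, ?_⟩
        · have := Ideal.pow_le_self (Nat.succ_ne_zero N) hym
          have := m.add_mem ha this
          convert this using 1; ring
        · have h7 : f.eval (a + y) = c * y^2 := by
            rw [← hc, ← hu]
            have : (u:B) * ((u⁻¹ : Bˣ) : B) = 1 := u.mul_inv
            rw [hy]; linear_combination (-f.eval a) * this
          rw [h7]
          refine Ideal.mul_mem_left _ _ ?_
          have := Ideal.pow_mem_pow hym 2
          rw [← pow_mul] at this
          exact Ideal.pow_le_pow_right (by omega) this
    obtain ⟨ϖ, hϖ⟩ := IsDiscreteValuationRing.exists_irreducible B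
    obtain ⟨n, hn⟩ := IsDiscreteValuationRing.ideal_eq_span_pow_irreducible hJ hϖ
    have hn' : J = m ^ n := by
      rw [hn, ← Ideal.span_singleton_pow, ← hϖ.maximalIdeal_eq]
    obtain ⟨a, ha, hfa⟩ := key n
    have hJm : J ≤ m := hH.jac.trans (IsLocalRing.jacobson_eq_maximalIdeal ⊥ bot_ne_top).le
    obtain ⟨b, hb, hb2⟩ := hH.is_henselian f hf a
      (by rw [hn']; exact Ideal.pow_le_pow_right (by omega) hfa) ((hu a ha).map _)
    refine ⟨b, hb, ?_⟩
    have := m.add_mem (hJm hb2) ha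
    convert this using 1; ring

theorem sep_of_not_dvd {F E : Type} [Field F] [Field E] [Algebra F E] [FiniteDimensional F E]
    (p : ℕ) (hp : p.Prime) [CharP F p] (h : ¬ p ∣ Module.finrank F E) :
    Algebra.IsSeparable F E := by
  refine ⟨fun x => ?_⟩
  have hi := minpoly.irreducible (Algebra.IsIntegral.isIntegral (R := F) x)
  rcases Polynomial.separable_or p hi with h1 | ⟨_, g, hg, hg2⟩
  · exact h1
  · exfalso; apply h
    have h3 : (minpoly F x).natDegree ∣ Module.finrank F E :=
      minpoly.degree_dvd (Algebra.IsIntegral.isIntegral (R := F) x)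
    rw [← hg2, Polynomial.natDegree_expand] at h3
    exact (Dvd.intro_left _ rfl).trans h3

theorem root_of_unit {B : Type} [CommRing B] [HenselianLocalRing B] (p : ℕ) (hp : p.Prime)
    [CharP B p] (n : ℕ) (hn : ¬ p ∣ n) (b : B) (hb : b - 1 ∈ IsLocalRing.maximalIdeal B) :
    ∃ r : B, IsUnit r ∧ r ^ n = b := by
  have hn0 : n ≠ 0 := by rintro rfl; simp at hn
  have := Fact.mk hp
  have hun : IsUnit (n : B) := by
    have h := (CharP.isUnit_natCast_iff (R := B) hp (n := n))
    exact h.mpr hn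
  obtain ⟨r, hr, hr2⟩ := HenselianLocalRing.is_henselian (X ^ n - C b) (monic_X_pow_sub_C b hn0) 1
    (by simpa using neg_mem hb) (by simpa [derivative_X_pow] using hun)
  have hr : r ^ n = b := by simpa [sub_eq_zero] using hr
  refine ⟨r, ?_, hr⟩
  by_contra hc
  have hc' : r ∈ IsLocalRing.maximalIdeal B := hc
  have := Ideal.sub_mem _ hc' hr2
  rw [sub_sub_cancel] at this
  exact this isUnit_one

set_option maxHeartbeats 1000000 in
theorem T0 (p : ℕ) (hp : p.Prime) {κ B : Type} [Field κ] [CharP κ p] [CommRing B] [IsDomain B]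
    [IsDiscreteValuationRing B] [HenselianLocalRing B] [Algebra (PowerSeries κ) B]
    [Module.Finite (PowerSeries κ) B] [Algebra κ B] [IsScalarTower κ (PowerSeries κ) B]
    [FiniteDimensional κ (IsLocalRing.ResidueField B)] (e : ℕ)
    (he : Ideal.span {algebraMap (PowerSeries κ) B PowerSeries.X} = IsLocalRing.maximalIdeal B ^ e)
    (hpe : ¬ p ∣ e) (hpf : ¬ p ∣ Module.finrank κ (IsLocalRing.ResidueField B)) :
    ∃ α π : B, ∃ w ∈ Algebra.adjoin κ {α}, Irreducible π ∧
      π ^ e = w * algebraMap (PowerSeries κ) B PowerSeries.X ∧ IsIntegral κ α ∧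
      (minpoly κ α).natDegree = Module.finrank κ (IsLocalRing.ResidueField B) ∧
      Algebra.adjoin (PowerSeries κ) {α, π} = ⊤ ∧
      ∀ b : B, IsUnit b → ∀ n : ℕ, ¬ p ∣ n →
        ∃ c ∈ Algebra.adjoin κ {α}, ∃ r, IsUnit r ∧ b = c * r ^ n := by
  set m := IsLocalRing.maximalIdeal B with hm
  set t := algebraMap (PowerSeries κ) B PowerSeries.X with ht
  have hchB : CharP B p := charP_of_injective_algebraMap (algebraMap κ B).injective p
  have := sep_of_not_dvd p hp hpf
  obtain ⟨a0, ha0⟩ := Field.exists_primitive_element κ (IsLocalRing.ResidueField B)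
  have hint : IsIntegral κ a0 := Algebra.IsIntegral.isIntegral a0
  set g := minpoly κ a0 with hg
  have hsep : g.Separable := Algebra.IsSeparable.isSeparable κ a0
  have hTF := ((HenselianLocalRing.TFAE B).out 0 1).mp (inferInstance : HenselianLocalRing B)
  obtain ⟨α, hα, hα2⟩ := hTF (g.map (algebraMap κ B)) ((minpoly.monic hint).map _) a0
    (by rw [aeval_map_algebraMap]; exact minpoly.aeval κ a0)
    (by rw [derivative_map, aeval_map_algebraMap]
        exact hsep.aeval_derivative_ne_zero (minpoly.aeval κ a0))
  have hαg : aeval α g = 0 := by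
    rw [← eval_map_algebraMap]; exact hα
  have hαi : IsIntegral κ α := ⟨g, minpoly.monic hint, hαg⟩
  have hmin : minpoly κ α = g :=
    (minpoly.eq_of_irreducible_of_monic (minpoly.irreducible hint) hαg (minpoly.monic hint)).symm
  have hres : ∀ b : B, ∃ c ∈ Algebra.adjoin κ {α}, b - c ∈ m := by
    intro b
    have h1 : IsLocalRing.residue B b ∈ (⊤ : IntermediateField κ (IsLocalRing.ResidueField B)) :=
      trivial
    rw [← ha0, ← IntermediateField.mem_toSubalgebra,
      IntermediateField.adjoin_simple_toSubalgebra_of_isAlgebraic hint.isAlgebraic,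
      Algebra.adjoin_singleton_eq_range_aeval] at h1
    obtain ⟨P, hP⟩ := h1
    refine ⟨aeval α P, aeval_mem_adjoin_singleton κ α, ?_⟩
    rw [hm, ← IsLocalRing.residue_eq_zero_iff, map_sub, sub_eq_zero, ← hP, ← hα2]
    change aeval (algebraMap B (IsLocalRing.ResidueField B) α) P = _
    rw [aeval_algebraMap_apply]; rfl
  have hunit : ∀ b : B, IsUnit b → ∀ n : ℕ, ¬ p ∣ n →
        ∃ c ∈ Algebra.adjoin κ {α}, ∃ r, IsUnit r ∧ b = c * r ^ n := by
    intro b hb n hn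
    obtain ⟨c, hc, hbc⟩ := hres b
    have hcu : IsUnit c := by
      by_contra h
      have h' : c ∈ m := h
      have := m.add_mem hbc h'
      rw [sub_add_cancel] at this
      exact this hb
    obtain ⟨u, hu⟩ := hcu
    obtain ⟨r, hr, hr2⟩ := root_of_unit p hp n hn (((u⁻¹ : Bˣ) : B) * b) (by
      have := m.mul_mem_left ((u⁻¹ : Bˣ) : B) hbc
      rwa [mul_sub, ← hu, Units.inv_mul] at this)
    refine ⟨c, hc, r, hr, ?_⟩
    rw [hr2, ← hu, Units.mul_inv_cancel_left]
  obtain ⟨ϖ, hϖ⟩ := IsDiscreteValuationRing.exists_irreducible B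
  have h1 : Ideal.span {ϖ ^ e} = Ideal.span {t} := by
    rw [he, ← Ideal.span_singleton_pow, hm, hϖ.maximalIdeal_eq]
  rw [Ideal.span_singleton_eq_span_singleton] at h1
  obtain ⟨u, hu⟩ := h1.symm
  obtain ⟨w, hw, r, ⟨r', hr⟩, hur⟩ := hunit u u.isUnit e hpe
  obtain ⟨π, hπ, hπe⟩ : ∃ π : B, Irreducible π ∧ π ^ e = w * t := by
    refine ⟨ϖ * ((r'⁻¹ : Bˣ) : B), (irreducible_mul_units r'⁻¹).mpr hϖ, ?_⟩
    rw [mul_pow, ← hu, hur, ← hr]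
    have : (r' : B) ^ e * ((r'⁻¹ : Bˣ) : B) ^ e = 1 := by rw [← mul_pow]; simp
    linear_combination t * w * this
  refine ⟨α, π, w, hw, hπ, hπe, hαi, ?_, ?_, hunit⟩
  · rw [hmin, ← Field.primitive_element_iff_minpoly_natDegree_eq κ a0]; exact ha0
  let N := Algebra.adjoin (PowerSeries κ) {α, π}
  have hsub : ∀ c ∈ Algebra.adjoin κ {α}, c ∈ N := by
    intro c hc
    have h : Algebra.adjoin κ {α} ≤ N.restrictScalars κ :=
      Algebra.adjoin_le (by rintro _ rfl; exact Algebra.subset_adjoin (by simp))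
    exact h hc
  have hπN : π ∈ N := Algebra.subset_adjoin (by simp)
  have hexp : ∀ j : ℕ, ∀ b : B, ∃ s ∈ N, ∃ b', b = s + π ^ j * b' := by
    intro j
    induction j with
    | zero => intro b; exact ⟨0, N.zero_mem, b, by simp⟩
    | succ j ih =>
      intro b
      obtain ⟨s, hs, b', hb⟩ := ih b
      obtain ⟨c, hc, hbc⟩ := hres b'
      rw [hm, hπ.maximalIdeal_eq, Ideal.mem_span_singleton] at hbc
      obtain ⟨b'', hb''⟩ := hbc
      refine ⟨s + π ^ j * c, N.add_mem hs (N.mul_mem (N.pow_mem hπN j) (hsub c hc)), b'', ?_⟩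
      rw [hb]; linear_combination π ^ j * hb''
  have hle : (⊤ : Submodule (PowerSeries κ) B) ≤ N.toSubmodule := by
    refine Submodule.le_of_le_smul_of_le_jacobson_bot (I := Ideal.span {PowerSeries.X})
      Module.Finite.fg_top (IsAdicComplete.le_jacobson_bot _) ?_
    intro b _
    obtain ⟨s, hs, b', hb⟩ := hexp e b
    rw [hb, hπe]
    refine Submodule.add_mem_sup hs ?_
    have : w * t * b' = (PowerSeries.X : PowerSeries κ) • (w * b') := by
      rw [Algebra.smul_def]; ring
    rw [this]
    exact Submodule.smul_mem_smul (Ideal.mem_span_singleton_self _) trivial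
  exact top_le_iff.mp fun b hb => hle hb
theorem liesOver_aux {κ B : Type} [Field κ] [CommRing B] [IsDomain B] [IsLocalRing B]
    [Algebra (PowerSeries κ) B] [Module.Finite (PowerSeries κ) B] :
    (IsLocalRing.maximalIdeal B).LiesOver (IsLocalRing.maximalIdeal (PowerSeries κ)) := by
  have h1 := Ideal.isMaximal_comap_of_isIntegral_of_isMaximal (R := PowerSeries κ)
    (IsLocalRing.maximalIdeal B)
  exact ⟨(IsLocalRing.eq_maximalIdeal h1).symm⟩

theorem resid_aux {κ B : Type} [Field κ] [CommRing B] [IsDomain B] [IsLocalRing B]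
    [Algebra (PowerSeries κ) B] [Module.Finite (PowerSeries κ) B] [Algebra κ B]
    [IsScalarTower κ (PowerSeries κ) B]
    [(IsLocalRing.maximalIdeal B).LiesOver (IsLocalRing.maximalIdeal (PowerSeries κ))] :
    FiniteDimensional κ (IsLocalRing.ResidueField B) ∧
    Ideal.inertiaDeg' (IsLocalRing.maximalIdeal (PowerSeries κ)) (IsLocalRing.maximalIdeal B) =
      Module.finrank κ (IsLocalRing.ResidueField B) := by
  let O := PowerSeries κ
  have hs : Function.Surjective (algebraMap κ (O ⧸ IsLocalRing.maximalIdeal O)) := by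
    intro y
    obtain ⟨y, rfl⟩ := Ideal.Quotient.mk_surjective y
    refine ⟨PowerSeries.constantCoeff y, ?_⟩
    rw [IsScalarTower.algebraMap_apply κ O]
    refine Ideal.Quotient.eq.mpr ?_
    rw [PowerSeries.maximalIdeal_eq_span_X, Ideal.mem_span_singleton, PowerSeries.X_dvd_iff]
    change PowerSeries.constantCoeff (PowerSeries.C _ - _) = 0
    simp
  have h1 : Module.Finite κ (O ⧸ IsLocalRing.maximalIdeal O) :=
    Module.Finite.of_surjective (Algebra.linearMap κ _) hs
  have h2 : Module.finrank κ (O ⧸ IsLocalRing.maximalIdeal O) = 1 := by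
    have := (LinearEquiv.ofBijective (Algebra.linearMap κ (O ⧸ IsLocalRing.maximalIdeal O))
      ⟨(algebraMap κ _).injective, hs⟩).finrank_eq
    rw [← this]; exact Module.finrank_self κ
  have h3 : IsScalarTower κ (O ⧸ IsLocalRing.maximalIdeal O)
      (B ⧸ IsLocalRing.maximalIdeal B) := by
    refine ⟨fun x y z => ?_⟩
    obtain ⟨y, rfl⟩ := Ideal.Quotient.mk_surjective y
    obtain ⟨z, rfl⟩ := Ideal.Quotient.mk_surjective z
    have e0 : ∀ (y : O) (v : B ⧸ IsLocalRing.maximalIdeal B),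
        (Ideal.Quotient.mk (IsLocalRing.maximalIdeal O) y) • v = y • v :=
      fun y v => algebraMap_smul (O ⧸ IsLocalRing.maximalIdeal O) y v
    have e1 : x • (Ideal.Quotient.mk (IsLocalRing.maximalIdeal O) y) =
      Ideal.Quotient.mk (IsLocalRing.maximalIdeal O) (x • y) := rfl
    rw [e1, e0, e0, smul_assoc]
  have h4 : Module.Finite (O ⧸ IsLocalRing.maximalIdeal O)
      (B ⧸ IsLocalRing.maximalIdeal B) := inferInstance
  have h5 : Module.Free (O ⧸ IsLocalRing.maximalIdeal O)
      (B ⧸ IsLocalRing.maximalIdeal B) := by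
    let _ : Field (O ⧸ IsLocalRing.maximalIdeal O) := Ideal.Quotient.field _
    infer_instance
  have h6 : Module.Finite κ (B ⧸ IsLocalRing.maximalIdeal B) :=
    Module.Finite.trans (O ⧸ IsLocalRing.maximalIdeal O) (B ⧸ IsLocalRing.maximalIdeal B)
  refine ⟨h6, ?_⟩
  rw [Ideal.inertiaDeg'_algebraMap]
  have := Module.finrank_mul_finrank κ (O ⧸ IsLocalRing.maximalIdeal O)
    (B ⧸ IsLocalRing.maximalIdeal B)
  rw [h2, one_mul] at this
  exact this


set_option maxHeartbeats 1000000 in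
theorem T1 (p : ℕ) (hp : p.Prime) (κ E : Type) [Field κ] [CharP κ p] [Field E]
    [Algebra (LaurentSeries κ) E] [FiniteDimensional (LaurentSeries κ) E]
    [Algebra κ E] (hκ : ∀ c : κ, algebraMap κ E c = algebraMap (LaurentSeries κ) E (HahnSeries.C c))
    (hdeg : ¬ p ∣ Module.finrank (LaurentSeries κ) E) :
    ∃ α π : E, ∃ w ∈ Algebra.adjoin κ {α}, ∃ e : ℕ, e ≠ 0 ∧ ¬ p ∣ e ∧ IsIntegral κ α ∧
      (minpoly κ α).natDegree * e = Module.finrank (LaurentSeries κ) E ∧ π ≠ 0 ∧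
      π ^ e = w * algebraMap (LaurentSeries κ) E (HahnSeries.single (1 : ℤ) (1 : κ)) ∧
      Algebra.adjoin (LaurentSeries κ) {α, π} = ⊤ ∧
      ∀ z : E, z ≠ 0 → ∀ n : ℕ, ¬ p ∣ n →
        ∃ c ∈ Algebra.adjoin κ {α}, ∃ m : ℤ, ∃ r : E, r ≠ 0 ∧ z = c * π ^ m * r ^ n := by
  let K := LaurentSeries κ
  let O := PowerSeries κ
  have hchK : CharP K p := charP_of_injective_ringHom (HahnSeries.C : κ →+* K).injective p
  have hsep : Algebra.IsSeparable K E := sep_of_not_dvd p hp hdeg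
  let _ : Algebra O E := ((algebraMap K E).comp (algebraMap O K)).toAlgebra
  have t1 : IsScalarTower O K E := IsScalarTower.of_algebraMap_eq fun x => rfl
  have t3 : IsScalarTower κ O E := IsScalarTower.of_algebraMap_eq fun x => by
    rw [hκ]
    change algebraMap K E _ = algebraMap K E (HahnSeries.ofPowerSeries ℤ κ _)
    congr 1
    exact (HahnSeries.ofPowerSeries_C x).symm
  let B := integralClosure O E
  have hfinB : Module.Finite O B := IsIntegralClosure.finite O K E B
  have hDed : IsDedekindDomain B := integralClosure.isDedekindDomain O K E
  have hfr : IsFractionRing B E := integralClosure.isFractionRing_of_finite_extension K E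
  have hac : IsAdicComplete (IsLocalRing.maximalIdeal O) O := by
    rw [PowerSeries.maximalIdeal_eq_span_X]; infer_instance
  obtain ⟨hlocB, hHB⟩ := isLocalRing_of_finite' (R := O) (B := B)
  have hinj : Function.Injective (algebraMap O B) := by
    have h1 : Function.Injective (algebraMap O E) :=
      (algebraMap K E).injective.comp HahnSeries.ofPowerSeries_injective
    intro a b hab
    apply h1
    rw [IsScalarTower.algebraMap_apply O B E, hab, ← IsScalarTower.algebraMap_apply O B E]
  have hnf : ¬ IsField B := fun h => IsDiscreteValuationRing.not_isField O
    (isField_of_isIntegral_of_isField hinj h)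
  have hdvr : IsDiscreteValuationRing B :=
    ((IsDiscreteValuationRing.TFAE B hnf).out 0 2).mpr hDed
  have hmap : (IsLocalRing.maximalIdeal O).map (algebraMap O B) =
      Ideal.span {algebraMap O B PowerSeries.X} := by
    rw [PowerSeries.maximalIdeal_eq_span_X, Ideal.map_span, Set.image_singleton]
  have ht0 : algebraMap O B PowerSeries.X ≠ 0 := by
    rw [Ne, map_eq_zero_iff _ hinj]; exact PowerSeries.X_ne_zero
  have hmap0 : (IsLocalRing.maximalIdeal O).map (algebraMap O B) ≠ ⊥ := by
    rw [hmap, Ne, Ideal.span_singleton_eq_bot]; exact ht0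
  have hHen : HenselianLocalRing B := henselian_dvr' _ hmap0
  obtain ⟨e, he⟩ : ∃ e : ℕ, (IsLocalRing.maximalIdeal O).map (algebraMap O B) =
      IsLocalRing.maximalIdeal B ^ e := by
    obtain ⟨ϖ, hϖ⟩ := IsDiscreteValuationRing.exists_irreducible B
    obtain ⟨e, he⟩ := IsDiscreteValuationRing.ideal_eq_span_pow_irreducible hmap0 hϖ
    exact ⟨e, by rw [he, hϖ.maximalIdeal_eq, Ideal.span_singleton_pow]⟩
  have t4 : IsScalarTower κ O B := IsScalarTower.of_algebraMap_eq fun x => by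
    apply FaithfulSMul.algebraMap_injective B E
    rw [← IsScalarTower.algebraMap_apply O B E, ← IsScalarTower.algebraMap_apply κ O E]
    rfl
  have hlo : (IsLocalRing.maximalIdeal B).LiesOver (IsLocalRing.maximalIdeal O) := by
    exact liesOver_aux (κ := κ) (B := B)
  have hef := Ideal.ramificationIdx_mul_inertiaDeg_of_isLocalRing (R := O) (S := B) K E
    (p := IsLocalRing.maximalIdeal O) (IsDiscreteValuationRing.not_a_field O)
  have hram : Ideal.ramificationIdx' (IsLocalRing.maximalIdeal O) (IsLocalRing.maximalIdeal B) = e := by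
    refine Ideal.ramificationIdx'_spec he.le ?_
    rw [he]
    intro hle
    have h2 := le_antisymm hle (Ideal.pow_le_pow_right (Nat.le_succ e))
    obtain ⟨ϖ, hϖ⟩ := IsDiscreteValuationRing.exists_irreducible B
    rw [hϖ.maximalIdeal_eq, Ideal.span_singleton_pow, Ideal.span_singleton_pow,
      Ideal.span_singleton_le_span_singleton] at hle
    exact hϖ.not_isUnit (isUnit_of_dvd_one ((mul_dvd_mul_iff_left
      (pow_ne_zero e hϖ.ne_zero)).mp (by rwa [mul_one, ← pow_succ])))
  have hfinres := resid_aux (κ := κ) (B := B)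
  obtain ⟨hfinres, hin⟩ := hfinres
  rw [hram, hin] at hef
  have hpe : ¬ p ∣ e := fun h => hdeg (hef ▸ h.mul_right _)
  have hpf : ¬ p ∣ Module.finrank κ (IsLocalRing.ResidueField B) :=
    fun h => hdeg (hef ▸ h.mul_left _)
  have hBE : Function.Injective (algebraMap B E) := FaithfulSMul.algebraMap_injective B E
  obtain ⟨α, π, w, hw, hπ, hπe, hαi, hαf, htop, hunit⟩ := T0 p hp e (hmap ▸ he) hpe hpf
  have hadj : ∀ c ∈ Algebra.adjoin κ {α}, algebraMap B E c ∈ Algebra.adjoin κ {algebraMap B E α} := by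
    intro c hc
    rw [Algebra.adjoin_singleton_eq_range_aeval] at hc ⊢
    obtain ⟨P, rfl⟩ := hc
    exact ⟨P, by simpa using aeval_algebraMap_apply E α P⟩
  have hX : algebraMap B E (algebraMap O B PowerSeries.X) =
      algebraMap K E (HahnSeries.single (1 : ℤ) (1 : κ)) := by
    rw [← IsScalarTower.algebraMap_apply O B E, IsScalarTower.algebraMap_apply O K E]
    congr 1
    exact HahnSeries.ofPowerSeries_X
  have hπ0 : algebraMap B E π ≠ 0 := by
    rw [Ne, map_eq_zero_iff _ hBE]; exact hπ.ne_zero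
  refine ⟨algebraMap B E α, algebraMap B E π, algebraMap B E w, hadj w hw, e, ?_, hpe, ?_, ?_, hπ0,
    ?_, ?_, ?_⟩
  · rintro rfl; simp at hpe
  · exact hαi.algebraMap
  · rw [minpoly.algebraMap_eq hBE, hαf, mul_comm, hef]
  · rw [← map_pow, hπe, map_mul, hX]
  · rw [eq_top_iff]
    intro z _
    obtain ⟨a, b, hb, rfl⟩ := IsFractionRing.div_surjective (A := B) z
    have h1 : ∀ a : B, algebraMap B E a ∈
        Algebra.adjoin K {algebraMap B E α, algebraMap B E π} := by
      intro a
      have ha : a ∈ Algebra.adjoin O {α, π} := htop ▸ trivial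
      induction ha using Algebra.adjoin_induction with
      | mem x hx =>
        rcases hx with rfl | rfl <;> exact Algebra.subset_adjoin (by simp)
      | algebraMap r =>
        rw [← IsScalarTower.algebraMap_apply O B E, IsScalarTower.algebraMap_apply O K E]
        exact Subalgebra.algebraMap_mem _ _
      | add x y _ _ hx hy => rw [map_add]; exact add_mem hx hy
      | mul x y _ _ hx hy => rw [map_mul]; exact mul_mem hx hy
    rw [div_eq_mul_inv]
    refine mul_mem (h1 a) (Subalgebra.inv_mem_of_algebraic
      (Algebra.adjoin K {algebraMap B E α, algebraMap B E π}) (x := ⟨_, h1 b⟩) ?_)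
    exact Algebra.IsAlgebraic.isAlgebraic _
  · have hB : ∀ a : B, a ≠ 0 → ∃ (u : Bˣ) (n : ℕ), a = u * π ^ n := by
      intro a ha
      obtain ⟨n, u, h⟩ := IsDiscreteValuationRing.eq_unit_mul_pow_irreducible ha hπ
      exact ⟨u, n, h⟩
    intro z hz n hn
    obtain ⟨a, b, hb, rfl⟩ := IsFractionRing.div_surjective (A := B) z
    have hb0 : b ≠ 0 := nonZeroDivisors.ne_zero hb
    have ha0 : a ≠ 0 := by rintro rfl; simp at hz
    obtain ⟨u, i, hu⟩ := hB a ha0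
    obtain ⟨v, j, hv⟩ := hB b hb0
    obtain ⟨c, hc, r, hr, hcr⟩ := hunit ((u * v⁻¹ : Bˣ) : B) (Units.isUnit _) n hn
    refine ⟨algebraMap B E c, hadj c hc, (i : ℤ) - j, algebraMap B E r, ?_, ?_⟩
    · exact (hr.map (algebraMap B E)).ne_zero
    · have hv0 : algebraMap B E v ≠ 0 := (v.isUnit.map (algebraMap B E)).ne_zero
      have h3 : algebraMap B E u = algebraMap B E c * algebraMap B E r ^ n * algebraMap B E v := by
        rw [← map_pow, ← map_mul, ← map_mul, ← hcr]; simp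
      rw [hu, hv, map_mul, map_mul, map_pow, map_pow, zpow_sub₀ hπ0, zpow_natCast, zpow_natCast, h3]
      field_simp

set_option maxHeartbeats 1000000 in
theorem T2 (p : ℕ) (hp : p.Prime) (k : Type) [Field k] [CharP k p]
    (E : Type) [Field E] [Algebra (LaurentSeries (Kx k)) E]
    [FiniteDimensional (LaurentSeries (Kx k)) E]
    (hdeg : ¬ p ∣ Module.finrank (LaurentSeries (Kx k)) E)
    (j : k →+* E) (hj : ∀ c : k, j c = algebraMap (LaurentSeries (Kx k)) E
      (HahnSeries.C ((HahnSeries.C c : Kx k)))) :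
    ∃ a y π : E, ∃ e₂ e : ℕ, ∃ P Q₂ Q : k[X], ∃ m : ℤ, e₂ ≠ 0 ∧ e ≠ 0 ∧ P.Monic ∧
      P.eval₂ j a = 0 ∧
      P.natDegree * e₂ * e = Module.finrank (LaurentSeries (Kx k)) E ∧
      y ^ e₂ = Q₂.eval₂ j a * algebraMap (LaurentSeries (Kx k)) E
        (HahnSeries.C ((HahnSeries.single (1 : ℤ) (1 : k) : Kx k))) ∧
      π ^ e = Q.eval₂ j a * y ^ m *
        algebraMap (LaurentSeries (Kx k)) E (HahnSeries.single (1 : ℤ) (1 : Kx k)) ∧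
      Algebra.adjoin (LaurentSeries (Kx k)) {a, y, π} = ⊤ := by
  have hchK : CharP (Kx k) p := charP_of_injective_ringHom (HahnSeries.C : k →+* Kx k).injective p
  let _ : Algebra (Kx k) E :=
    ((algebraMap (LaurentSeries (Kx k)) E).comp (HahnSeries.C : Kx k →+* LaurentSeries (Kx k))).toAlgebra
  have hal : ∀ c : Kx k, algebraMap (Kx k) E c =
    algebraMap (LaurentSeries (Kx k)) E (HahnSeries.C c) := fun c => rfl
  obtain ⟨α, π, w, hw, e, he0, hpe, hαi, hdeg1, hπ0, hπe, htop, -⟩ :=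
    T1 p hp (Kx k) E hal hdeg
  let κ' := IntermediateField.adjoin (Kx k) {α}
  have hfd : FiniteDimensional (Kx k) κ' := IntermediateField.adjoin.finiteDimensional hαi
  have hfr : Module.finrank (Kx k) κ' = (minpoly (Kx k) α).natDegree :=
    IntermediateField.adjoin.finrank hαi
  let iA0 : Algebra (Kx k) κ' := inferInstance
  let iA : Algebra (LaurentSeries k) κ' := iA0
  have hfd2 : FiniteDimensional (LaurentSeries k) κ' := hfd
  have hfr2 : Module.finrank (LaurentSeries k) κ' = (minpoly (Kx k) α).natDegree := hfr
  let _ : Algebra k κ' := ((algebraMap (Kx k) κ').comp (HahnSeries.C : k →+* Kx k)).toAlgebra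
  have hpf : ¬ p ∣ Module.finrank (LaurentSeries k) κ' := by
    intro h
    rw [hfr2] at h
    exact hdeg (hdeg1 ▸ h.mul_right _)
  obtain ⟨α₂, y, w₂, hw₂, e₂, he₂0, hpe₂, hα₂i, hdeg2, hy0, hye, htop2, hz⟩ :=
    T1 p hp k κ' (fun c => rfl) hpf
  have hwκ : w ∈ κ' :=
    (IntermediateField.algebra_adjoin_le_adjoin (Kx k) {α}) hw
  have hw0 : w ≠ 0 := by
    rintro rfl
    rw [zero_mul] at hπe
    exact hπ0 (pow_eq_zero_iff he0 |>.mp hπe)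
  obtain ⟨c, hc, m, r, hr0, hwc⟩ := hz ⟨w, hwκ⟩ (by
    intro h; exact hw0 (congrArg Subtype.val h)) e hpe
  have hjk : ∀ c : k, j c = ((algebraMap k κ' c : κ') : E) := fun c => hj c
  have hev : ∀ (Q : k[X]) (b : κ'), Q.eval₂ j (b : E) = ((aeval b Q : κ') : E) := by
    intro Q b
    have : j = (κ'.val : κ' →+* E).comp (algebraMap k κ') := RingHom.ext hjk
    rw [this]
    exact (hom_eval₂ Q (algebraMap k κ') (κ'.val : κ' →+* E) b).symm
  rw [Algebra.adjoin_singleton_eq_range_aeval] at hc hw₂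
  obtain ⟨Q, rfl⟩ := hc
  obtain ⟨Q₂, rfl⟩ := hw₂
  have hr0' : (r : E) ≠ 0 := fun h => hr0 (Subtype.ext h)
  refine ⟨α₂, y, π / r, e₂, e, minpoly k α₂, Q₂, Q, m, he₂0, he0, minpoly.monic hα₂i, ?_, ?_, ?_,
    ?_, ?_⟩
  · rw [hev, minpoly.aeval]; rfl
  · rw [hdeg2, hfr2, hdeg1]
  · rw [hev]
    exact congrArg Subtype.val hye
  · have hwE : w = ((aeval α₂ Q : κ') : E) * (y : E) ^ m * (r : E) ^ e := by
      have h := congrArg Subtype.val hwc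
      have h2 : ((y ^ m : κ') : E) = (y : E) ^ m := map_zpow₀ κ'.val y m
      rw [← h2]
      exact h
    have hre : (r : E) ^ e ≠ 0 := pow_ne_zero _ hr0'
    rw [hev, div_pow, hπe, div_eq_iff hre, hwE]
    ring
  · set S := Algebra.adjoin (LaurentSeries (Kx k)) {(α₂ : E), (y : E), π / r} with hS
    have h1 : ∀ b : κ', (b : E) ∈ S := by
      intro b
      have hb : b ∈ Algebra.adjoin (LaurentSeries k) {α₂, y} := htop2 ▸ trivial
      induction hb using Algebra.adjoin_induction with
      | mem x hx =>
        rcases hx with rfl | rfl <;> exact Algebra.subset_adjoin (by simp)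
      | algebraMap r => exact S.algebraMap_mem (HahnSeries.C (r : Kx k))
      | add x y _ _ hx hy => exact add_mem hx hy
      | mul x y _ _ hx hy => exact mul_mem hx hy
    rw [eq_top_iff, ← htop]
    refine Algebra.adjoin_le ?_
    rintro z (rfl | rfl)
    · exact h1 ⟨z, IntermediateField.mem_adjoin_simple_self _ _⟩
    · have := mul_mem (Algebra.subset_adjoin (R := LaurentSeries (Kx k))
        (show z / r ∈ ({(α₂ : E), (y : E), z / r} : Set E) by simp)) (h1 r)
      rwa [div_mul_cancel₀ _ hr0'] at this

theorem step_aux {F E : Type} [Field F] [Field E] [Algebra F E] (M : IntermediateField F E)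
    (hM : FiniteDimensional F M) (z : E) (P : M[X]) (hP : P ≠ 0) (hz : aeval z P = 0) :
    ∃ M' : IntermediateField F E, M ≤ M' ∧ z ∈ M' ∧ FiniteDimensional F M' ∧
      Module.finrank F M' ≤ Module.finrank F M * P.natDegree := by
  have hi : IsIntegral M z := (show IsAlgebraic M z from ⟨P, hP, hz⟩).isIntegral
  have hfd : FiniteDimensional M (IntermediateField.adjoin M {z}) :=
    IntermediateField.adjoin.finiteDimensional hi
  have hfr : Module.finrank M (IntermediateField.adjoin M {z}) = (minpoly M z).natDegree :=
    IntermediateField.adjoin.finrank hi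
  have hle : (minpoly M z).natDegree ≤ P.natDegree := natDegree_le_of_dvd (minpoly.dvd M z hz) hP
  refine ⟨(IntermediateField.adjoin M {z}).restrictScalars F, ?_, ?_, ?_, ?_⟩
  · intro x hx
    exact (IntermediateField.adjoin M {z}).algebraMap_mem ⟨x, hx⟩
  · exact IntermediateField.mem_adjoin_simple_self M z
  · exact FiniteDimensional.trans F M (IntermediateField.adjoin M {z})
  · have hfree : Module.Free M (IntermediateField.adjoin M {z}) :=
      Module.Free.of_divisionRing M (IntermediateField.adjoin M {z})
    have := Module.finrank_mul_finrank F M (IntermediateField.adjoin M {z})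
    calc _ = Module.finrank F (IntermediateField.adjoin M {z}) := rfl
      _ = Module.finrank F M * (minpoly M z).natDegree := by rw [← this, hfr]
      _ ≤ _ := Nat.mul_le_mul_left _ hle

theorem step_pow {F E : Type} [Field F] [Field E] [Algebra F E] (M : IntermediateField F E)
    (hM : FiniteDimensional F M) (z : E) (e : ℕ) (he : e ≠ 0) (hz : z ^ e ∈ M) :
    ∃ M' : IntermediateField F E, M ≤ M' ∧ z ∈ M' ∧ FiniteDimensional F M' ∧
      Module.finrank F M' ≤ Module.finrank F M * e := by
  have h := step_aux M hM z (X ^ e - C ⟨z ^ e, hz⟩) (X_pow_sub_C_ne_zero (Nat.pos_of_ne_zero he) _)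
    (by rw [map_sub, map_pow, aeval_X, aeval_C, sub_eq_zero]; rfl)
  rwa [natDegree_X_pow_sub_C] at h

theorem base_aux {F K E : Type} [Field F] [Field K] [Field E] [Algebra F K] [Algebra K E]
    [Algebra F E] [IsScalarTower F K E] [FiniteDimensional K E] (M : IntermediateField F E)
    (hM : FiniteDimensional F M) (hle : Module.finrank F M ≤ Module.finrank K E)
    (S : Set E) (hSM : S ⊆ M) (hS : Algebra.adjoin K S = ⊤) :
    Module.finrank F M = Module.finrank K E ∧ Nonempty ((M ⊗[F] K) ≃ₐ[K] E) := by
  let f : M ⊗[F] K →ₐ[F] E := Algebra.TensorProduct.productMap M.val (IsScalarTower.toAlgHom F K E)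
  let g : M ⊗[F] K →ₐ[K] E :=
    { f.toRingHom with
      commutes' := fun c => by
        change f (1 ⊗ₜ c) = _
        simp [f] }
  have hg : ∀ m : M, g (m ⊗ₜ 1) = (m : E) := fun m => by
    change f (m ⊗ₜ 1) = _
    simp [f]
  have hsurj : Function.Surjective g := by
    rw [← AlgHom.range_eq_top, eq_top_iff, ← hS]
    refine Algebra.adjoin_le fun s hs => ⟨(⟨s, hSM hs⟩ : M) ⊗ₜ 1, hg _⟩
  let c : K ⊗[F] M ≃ₐ[K] M ⊗[F] K := Algebra.TensorProduct.commRight F K M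
  let g' : K ⊗[F] M →ₐ[K] E := g.comp c.toAlgHom
  have hsurj' : Function.Surjective g' := hsurj.comp c.surjective
  have hfr : Module.finrank K (K ⊗[F] M) = Module.finrank F M := Module.finrank_baseChange
  have hle2 : Module.finrank K E ≤ Module.finrank K (K ⊗[F] M) :=
    LinearMap.finrank_le_finrank_of_surjective (f := g'.toLinearMap) hsurj'
  have heq : Module.finrank F M = Module.finrank K E := le_antisymm hle (hfr ▸ hle2)
  have hinj : Function.Injective g' :=
    (LinearMap.injective_iff_surjective_of_finrank_eq_finrank (f := g'.toLinearMap)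
      (hfr.trans heq)).mpr hsurj'
  exact ⟨heq, ⟨c.symm.trans (AlgEquiv.ofBijective g' ⟨hinj, hsurj'⟩)⟩⟩

theorem eval_mem_aux {F E k : Type} [Field F] [Field E] [Field k] [Algebra F E]
    (M : IntermediateField F E) (i : k →+* F) (a : E) (ha : a ∈ M) (Q : k[X]) :
    Q.eval₂ ((algebraMap F E).comp i) a ∈ M := by
  rw [eval₂_eq_sum]
  exact sum_mem fun n _ => mul_mem (M.algebraMap_mem _) (pow_mem ha n)

theorem descent_aux (p : ℕ) (hp : p.Prime) (k : Type) [Field k] [CharP k p]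
    (ψ : RatFunc (LaurentSeries k) →+* LaurentSeries (Kx k))
    (hψC : ∀ a : LaurentSeries k,
      ψ (RatFunc.C a) = lsMap ((HahnSeries.C : k →+* Kx k)) a)
    (hψX : ψ RatFunc.X = HahnSeries.C ((HahnSeries.single (1 : ℤ) (1 : k) : Kx k)))
    (E : Type) [Field E] [Algebra (LaurentSeries (Kx k)) E]
    [FiniteDimensional (LaurentSeries (Kx k)) E]
    (hdeg : ¬ p ∣ Module.finrank (LaurentSeries (Kx k)) E) :
    letI : Algebra (RatFunc (LaurentSeries k)) (LaurentSeries (Kx k)) := ψ.toAlgebra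
    ∃ (E' : Type) (_ : Field E') (_ : Algebra (RatFunc (LaurentSeries k)) E'),
      FiniteDimensional (RatFunc (LaurentSeries k)) E' ∧
      Algebra.IsSeparable (RatFunc (LaurentSeries k)) E' ∧
      Nonempty ((E' ⊗[RatFunc (LaurentSeries k)] LaurentSeries (Kx k))
        ≃ₐ[LaurentSeries (Kx k)] E) := by
  let _ : Algebra (RatFunc (LaurentSeries k)) (LaurentSeries (Kx k)) := ψ.toAlgebra
  let F := RatFunc (LaurentSeries k)
  let i : k →+* F := (RatFunc.C : LaurentSeries k →+* F).comp HahnSeries.C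
  let _ : Algebra F E := ((algebraMap (LaurentSeries (Kx k)) E).comp ψ).toAlgebra
  have tw : IsScalarTower F (LaurentSeries (Kx k)) E := IsScalarTower.of_algebraMap_eq fun x => rfl
  have hchF : CharP F p := charP_of_injective_ringHom i.injective p
  obtain ⟨a, y, π, e₂, e, P, Q₂, Q, m, he₂, he, hPm, hPa, hdegs, hy, hπ, htop⟩ :=
    T2 p hp k E hdeg ((algebraMap F E).comp i) (fun c => by
      change algebraMap (LaurentSeries (Kx k)) E (ψ (RatFunc.C (HahnSeries.C c))) = _
      rw [hψC]
      congr 1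
      exact HahnSeries.map_C _ _)
  have hT : algebraMap F E (RatFunc.C (HahnSeries.single (1 : ℤ) (1 : k))) =
      algebraMap (LaurentSeries (Kx k)) E (HahnSeries.single (1 : ℤ) (1 : Kx k)) := by
    change algebraMap (LaurentSeries (Kx k)) E (ψ (RatFunc.C _)) = _
    rw [hψC]
    congr 1
    let f : k →+* Kx k := HahnSeries.C
    refine (HahnSeries.map_single (R := k) (S := Kx k)
      ((f : k →+ Kx k) : ZeroHom k (Kx k))).trans ?_
    exact congrArg (HahnSeries.single (1 : ℤ)) (map_one (HahnSeries.C : k →+* Kx k))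
  have hX : algebraMap F E RatFunc.X = algebraMap (LaurentSeries (Kx k)) E
      (HahnSeries.C ((HahnSeries.single (1 : ℤ) (1 : k) : Kx k))) := by
    exact congrArg (algebraMap (LaurentSeries (Kx k)) E) hψX
  have hbot : Module.finrank F (⊥ : IntermediateField F E) = 1 := IntermediateField.finrank_bot
  obtain ⟨M₁, -, haM₁, hfd₁, hr₁⟩ := step_aux (⊥ : IntermediateField F E) inferInstance a
    (P.map ((algebraMap F (⊥ : IntermediateField F E)).comp i)) (hPm.map _).ne_zero (by
      rw [aeval_def, eval₂_map, ← hPa]; rfl)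
  rw [hbot, one_mul, hPm.natDegree_map] at hr₁
  obtain ⟨M₂, h12, hyM₂, hfd₂, hr₂⟩ := step_pow M₁ hfd₁ y e₂ he₂ (by
    rw [hy, ← hX]
    exact mul_mem (eval_mem_aux M₁ i a haM₁ Q₂) (M₁.algebraMap_mem _))
  obtain ⟨M₃, h23, hπM₃, hfd₃, hr₃⟩ := step_pow M₂ hfd₂ π e he (by
    rw [hπ, ← hT]
    exact mul_mem (mul_mem (eval_mem_aux M₂ i a (h12 haM₁) Q) (zpow_mem hyM₂ m))
      (M₂.algebraMap_mem _))
  have hle : Module.finrank F M₃ ≤ Module.finrank (LaurentSeries (Kx k)) E := by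
    rw [← hdegs]
    exact hr₃.trans (Nat.mul_le_mul_right _ (hr₂.trans (Nat.mul_le_mul_right _ hr₁)))
  obtain ⟨heq, hiso⟩ := base_aux (K := LaurentSeries (Kx k)) M₃ hfd₃ hle {a, y, π} (by
    rintro z (rfl | rfl | rfl)
    · exact h23 (h12 haM₁)
    · exact h23 hyM₂
    · exact hπM₃) htop
  exact ⟨M₃, inferInstance, inferInstance, hfd₃,
    sep_of_not_dvd p hp (heq ▸ hdeg), hiso⟩

end

/-- In equal characteristic `p > 0`, every finite Galois field extension of
`k((x))((t))` of degree prime to `p` is induced by a finite separable field extension of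
`k((t))(x)`, where `k((t))(x)` embeds into `k((x))((t))` by sending `t` to `t` and `x`
to `x`. -/
theorem branch_descent_tame_char_p
    (p : ℕ) (hp : p.Prime) (k : Type) [Field k] [CharP k p]
    (ψ : RatFunc (LaurentSeries k) →+* LaurentSeries (Kx k))
    (hψC : ∀ a : LaurentSeries k,
      ψ (RatFunc.C a) = lsMap ((HahnSeries.C : k →+* Kx k)) a)
    (hψX : ψ RatFunc.X = HahnSeries.C ((HahnSeries.single (1 : ℤ) (1 : k) : Kx k)))
    (E : Type) [Field E] [Algebra (LaurentSeries (Kx k)) E]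
    [FiniteDimensional (LaurentSeries (Kx k)) E]
    [IsGalois (LaurentSeries (Kx k)) E]
    (hdeg : ¬ p ∣ Module.finrank (LaurentSeries (Kx k)) E) :
    letI : Algebra (RatFunc (LaurentSeries k)) (LaurentSeries (Kx k)) := ψ.toAlgebra
    ∃ (E' : Type) (_ : Field E') (_ : Algebra (RatFunc (LaurentSeries k)) E'),
      FiniteDimensional (RatFunc (LaurentSeries k)) E' ∧
      Algebra.IsSeparable (RatFunc (LaurentSeries k)) E' ∧
      Nonempty ((E' ⊗[RatFunc (LaurentSeries k)] LaurentSeries (Kx k))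
        ≃ₐ[LaurentSeries (Kx k)] E) := by
  exact descent_aux p hp k ψ hψC hψX E hdeg
end
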